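/- Let Ω be an open set in ℝ⁴ with an almost complex structure J, let r be a C² strictly J-plurisubharmonic function on Ω, and let D = {x ∈ Ω : r(x) < 0} be relatively compact in Ω with dr ≠ 0 on ∂D. Let x⁰ ∈ D and p ∈ ∂D, and let (f^ν) be a sequence of (J,J)-holomorphic diffeomorphisms of D onto itself with f^ν(x⁰) → p. Then for every compact set K ⊆ Δ with 0 ∈ K one has sup { ‖f^ν(f(ζ)) − p‖ : ζ ∈ K, f a J-holomorphic disc f : Δ → D with f(0) = x⁰ } → 0 as ν → ∞; that is, f^ν ∘ f(K) → p uniformly with respect to all J-holomorphic discs f in D centered at x⁰. -/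

import Mathlib

open Metric Set Filter Topology Asymptotics

noncomputable section

/-- The standard complex structure `J_st` (multiplication by `i`) on a complex
normed space, viewed as a real-linear endomorphism. -/
def Jst (E : Type*) [NormedAddCommGroup E] [NormedSpace ℂ E] : E →L[ℝ] E :=
  ContinuousLinearMap.restrictScalars ℝ (Complex.I • ContinuousLinearMap.id ℂ E)

variable {E F : Type*} [NormedAddCommGroup E] [NormedSpace ℂ E]
  [NormedAddCommGroup F] [NormedSpace ℂ F]

/-- `J` is an almost complex structure on the set `Ω`: a smooth field of real-linear
endomorphisms with `J x ∘ J x = -id`. -/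
structure IsACS (Ω : Set E) (J : E → E →L[ℝ] E) : Prop where
  smooth : ContDiffOn ℝ (⊤ : ℕ∞) J Ω
  sq : ∀ x ∈ Ω, (J x).comp (J x) = -(ContinuousLinearMap.id ℝ E)

/-- `f` is `(J', J)`-holomorphic on `s`: `Df(x) ∘ J'(x) = J(f x) ∘ Df(x)`. -/
def IsHolomorphicMapOn (J' : E → E →L[ℝ] E) (J : F → F →L[ℝ] F) (f : E → F)
    (s : Set E) : Prop :=
  ∀ x ∈ s, DifferentiableAt ℝ f x ∧
    (fderiv ℝ f x).comp (J' x) = (J (f x)).comp (fderiv ℝ f x)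

/-- The Levi form `L^J(r)(x)(X) = -d(J⋆dr)(x)(X, J x X)` where `J⋆dr` is the 1-form
`X ↦ dr(x)(J x X)` and `dω(x)(X,Y) = (Dω(x)X)(Y) - (Dω(x)Y)(X)`. -/
def leviForm (J : E → E →L[ℝ] E) (r : E → ℝ) (x : E) (X : E) : ℝ :=
  -((fderiv ℝ (fun y => (fderiv ℝ r y).comp (J y)) x X) (J x X)
    - (fderiv ℝ (fun y => (fderiv ℝ r y).comp (J y)) x (J x X)) X)

/-- `r` is strictly `J`-plurisubharmonic on `s`. -/
def StrictPSHOn (J : E → E →L[ℝ] E) (r : E → ℝ) (s : Set E) : Prop :=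
  ∀ x ∈ s, ∀ X : E, X ≠ 0 → 0 < leviForm J r x X

/-- `r` is `J`-plurisubharmonic on `s` (nonnegative Levi form). -/
def PSHOn (J : E → E →L[ℝ] E) (r : E → ℝ) (s : Set E) : Prop :=
  ∀ x ∈ s, ∀ X : E, 0 ≤ leviForm J r x X

/-- `C⁰` norm of `g` on `K`. -/
def c0Norm {G : Type*} [NormedAddCommGroup G] (g : E → G) (K : Set E) : ℝ :=
  ⨆ x : K, ‖g (x : E)‖

/-- `C¹` norm of `g` on `K`. -/
def c1Norm {G : Type*} [NormedAddCommGroup G] [NormedSpace ℝ G] (g : E → G) (K : Set E) : ℝ :=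
  ⨆ x : K, max ‖g (x : E)‖ ‖fderiv ℝ g (x : E)‖

/-- `C¹` distance between `g` and `h` on `K`. -/
def c1Dist {G : Type*} [NormedAddCommGroup G] [NormedSpace ℝ G] (g h : E → G) (K : Set E) : ℝ :=
  ⨆ x : K, max ‖g (x : E) - h (x : E)‖ ‖fderiv ℝ g (x : E) - fderiv ℝ h (x : E)‖

/-- `C²` distance between `g` and `h` on `K`. -/
def c2Dist {G : Type*} [NormedAddCommGroup G] [NormedSpace ℝ G] (g h : E → G) (K : Set E) : ℝ :=
  ⨆ x : K, max ‖g (x : E) - h (x : E)‖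
    (max ‖fderiv ℝ g (x : E) - fderiv ℝ h (x : E)‖
      ‖fderiv ℝ (fderiv ℝ g) (x : E) - fderiv ℝ (fderiv ℝ h) (x : E)‖)

/-- A `J`-holomorphic disc in `D`: a map from the unit disc `Δ ⊂ ℂ` to `D` satisfying
`Df(ζ) ∘ J_st = J(f ζ) ∘ Df(ζ)`. -/
def IsJDisc (J : F → F →L[ℝ] F) (D : Set F) (f : ℂ → F) : Prop :=
  MapsTo f (ball (0 : ℂ) 1) D ∧
  ∀ ζ ∈ ball (0 : ℂ) 1, DifferentiableAt ℝ f ζ ∧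
    (fderiv ℝ f ζ).comp (Jst ℂ) = (J (f ζ)).comp (fderiv ℝ f ζ)

/-- The Kobayashi–Royden infinitesimal pseudometric of `(D, J)`. -/
def kobayashiMetric (J : F → F →L[ℝ] F) (D : Set F) (p : F) (v : F) : ℝ :=
  sInf {α : ℝ | 0 < α ∧ ∃ f : ℂ → F, IsJDisc J D f ∧ f 0 = p ∧
    fderiv ℝ f 0 1 = α⁻¹ • v}

/-- The integrated Kobayashi pseudodistance of `(D, J)`. -/
def kobayashiDist (J : F → F →L[ℝ] F) (D : Set F) (p q : F) : ℝ :=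
  sInf {d : ℝ | ∃ γ : ℝ → F, ContDiffOn ℝ 1 γ (Icc 0 1) ∧ MapsTo γ (Icc 0 1) D ∧
    γ 0 = p ∧ γ 1 = q ∧ d = ∫ t in (0:ℝ)..1, kobayashiMetric J D (γ t) (deriv γ t)}

/-- `f` is a smooth diffeomorphism from `s` onto `t` with inverse `g`. -/
def IsDiffeoOn (f : E → F) (g : F → E) (s : Set E) (t : Set F) : Prop :=
  ContDiffOn ℝ (⊤ : ℕ∞) f s ∧ ContDiffOn ℝ (⊤ : ℕ∞) g t ∧ MapsTo f s t ∧ MapsTo g t s ∧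
  (∀ x ∈ s, g (f x) = x) ∧ (∀ y ∈ t, f (g y) = y)

/-- The Laplacian of a real function on `ℂ ≅ ℝ²`. -/
def lapR (g : ℂ → ℝ) (ζ : ℂ) : ℝ :=
  fderiv ℝ (fun w => fderiv ℝ g w 1) ζ 1
    + fderiv ℝ (fun w => fderiv ℝ g w Complex.I) ζ Complex.I

/-- The Wirtinger derivative `∂g/∂ζ`. -/
def wirtingerD (g : ℂ → ℂ) (ζ : ℂ) : ℂ :=
  (fderiv ℝ g ζ 1 - Complex.I * fderiv ℝ g ζ Complex.I) / 2

/-- The Wirtinger derivative `∂g/∂ζ̄`. -/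
def wirtingerDbar (g : ℂ → ℂ) (ζ : ℂ) : ℂ :=
  (fderiv ℝ g ζ 1 + Complex.I * fderiv ℝ g ζ Complex.I) / 2

/-- The coordinates of a point of `ℂ²`. -/
def coord2 (z : ℂ × ℂ) : Fin 2 → ℂ := ![z.1, z.2]

abbrev E2 := EuclideanSpace ℂ (Fin 2)

/-!
Since `r` is strictly `J`-plurisubharmonic, adding a large multiple of it to
`log |y - q|² + A |y - q|` gives `J`-plurisubharmonic functions `log Φ` with a logarithmic pole at
any given point `q`, with constants uniform in `q`. For a `J`-holomorphic disc `h` with `h z = q`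
the function `log (Φ ∘ h)` is subharmonic and has a pole at least as strong as `log |ζ - z|²`, so
the maximum principle yields a Schwarz lemma `|h ζ - h z| ≤ C |ζ - z|` with `C` independent of `h`.
On the other hand `φ = r - c |y - p|²` is `J`-plurisubharmonic for small `c > 0`, negative on `D`
and maximal at `p`. If `h ζ` is far from `p`, then by the Schwarz lemma so is `h` on a fixed arc of
the circle `|ξ| = |ζ|`, and the mean value inequality on this circle keeps `φ (h 0)` below a fixed
negative constant. Hence `h 0` close to `p` forces `h ζ` to be close to `p`.

Discs are only assumed differentiable, so `φ ∘ h` need not have second derivatives. If the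
derivative of `h` is locally bounded, the mean value inequality is obtained by differentiating
`∫ d^c φ` over the `h`-images of circles in the radius, with derivatives along `h` passed to the
limit weakly. That the derivative is locally bounded follows from Baire's theorem: difference
quotients are bounded near some point of the exceptional set, and the Schwarz lemma on discs
avoiding that set extends the bound to a neighbourhood, a contradiction.
-/

section WeakConvergence

open MeasureTheory

variable {ι V : Type*} [NormedAddCommGroup V] [NormedSpace ℝ V]
  {l : Filter ι} {ω : ℝ → V →L[ℝ] ℝ} {s t L : ℝ}

theorem intervalIntegrable_clm_apply {b : ℝ → V} (hω : IntervalIntegrable ω volume s t)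
    (hb : Continuous b) : IntervalIntegrable (fun τ => ω τ (b τ)) volume s t := by
  refine (hω.norm.mul_continuousOn hb.norm.continuousOn).mono_fun ?_ (.of_forall fun τ => ?_)
  · exact isBoundedBilinearMap_apply.continuous.comp_aestronglyMeasurable
      (hω.aestronglyMeasurable_restrict_uIoc.prodMk hb.aestronglyMeasurable)
  · exact ((ω τ).le_opNorm _).trans (le_abs_self _)

theorem intervalIntegrable_of_tendsto_of_norm_le {W : Type*} [NormedAddCommGroup W]
    [l.IsCountablyGenerated] [l.NeBot] {a : ι → ℝ → W} {ω : ℝ → W} {C : ℝ}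
    (ha : ∀ᶠ i in l, Continuous (a i)) (haC : ∀ᶠ i in l, ∀ τ, ‖a i τ‖ ≤ C)
    (haω : ∀ τ, Tendsto (fun i => a i τ) l (𝓝 (ω τ))) : IntervalIntegrable ω volume s t := by
  have hωm : AEStronglyMeasurable ω volume := by
    obtain ⟨u, hu, hua⟩ := l.exists_seq_forall_of_frequently ha.frequently
    exact aestronglyMeasurable_of_tendsto_ae atTop (fun n => (hua n).aestronglyMeasurable)
      (.of_forall fun τ => (haω τ).comp hu)
  exact (intervalIntegrable_const (c := C)).mono_fun hωm.restrict (.of_forall fun τ =>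
    (le_of_tendsto (haω τ).norm (haC.mono fun i hi => hi τ)).trans (le_abs_self C))

theorem intervalIntegrable_clm_apply_of_tendsto [l.IsCountablyGenerated] [l.NeBot]
    {a : ι → ℝ → V} {b : ℝ → V} {C : ℝ} (hω : IntervalIntegrable ω volume s t)
    (ha : ∀ᶠ i in l, Continuous (a i)) (haC : ∀ᶠ i in l, ∀ τ, ‖a i τ‖ ≤ C)
    (hab : ∀ τ, Tendsto (fun i => a i τ) l (𝓝 (b τ))) :
    IntervalIntegrable (fun τ => ω τ (b τ)) volume s t := by
  have hb : IntervalIntegrable b volume s t := intervalIntegrable_of_tendsto_of_norm_le ha haC hab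
  refine (hω.norm.mul_const C).mono_fun ?_ (.of_forall fun τ => ?_)
  · exact isBoundedBilinearMap_apply.continuous.comp_aestronglyMeasurable
      (hω.aestronglyMeasurable_restrict_uIoc.prodMk hb.aestronglyMeasurable_restrict_uIoc)
  · exact ((ω τ).le_of_opNorm_le_of_le le_rfl
      (le_of_tendsto (hab τ).norm (haC.mono fun i hi => hi τ))).trans (le_abs_self _)

theorem tendsto_integral_clm_apply_of_tendsto [l.IsCountablyGenerated]
    {a : ι → ℝ → V} {b : ℝ → V} {C : ℝ} (hω : IntervalIntegrable ω volume s t)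
    (ha : ∀ᶠ i in l, Continuous (a i)) (haC : ∀ᶠ i in l, ∀ τ, ‖a i τ‖ ≤ C)
    (hab : ∀ τ, Tendsto (fun i => a i τ) l (𝓝 (b τ))) :
    Tendsto (fun i => ∫ τ in s..t, ω τ (a i τ)) l (𝓝 (∫ τ in s..t, ω τ (b τ))) :=
  intervalIntegral.tendsto_integral_filter_of_dominated_convergence (fun τ => ‖ω τ‖ * C)
    (ha.mono fun _ hi => (intervalIntegrable_clm_apply hω hi).aestronglyMeasurable_restrict_uIoc)
    (haC.mono fun _ hi => .of_forall fun τ _ => (ω τ).le_of_opNorm_le_of_le le_rfl (hi τ))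
    (hω.norm.mul_const C)
    (.of_forall fun τ _ => ((ω τ).continuous.tendsto _).comp (hab τ))

variable [CompleteSpace V]

theorem intervalIntegrable_clm_apply_deriv {b b' : ℝ → V}
    (hω : IntervalIntegrable ω volume s t) (hb : ∀ τ, HasDerivAt b (b' τ) τ)
    (hL : ∀ τ, ‖b' τ‖ ≤ L) :
    IntervalIntegrable (fun τ => ω τ (b' τ)) volume s t := by
  obtain rfl : deriv b = b' := funext fun τ => (hb τ).deriv
  refine (hω.norm.mul_const L).mono_fun ?_ (.of_forall fun τ => ?_)
  · exact isBoundedBilinearMap_apply.continuous.comp_aestronglyMeasurable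
      (hω.aestronglyMeasurable_restrict_uIoc.prodMk
        (stronglyMeasurable_deriv b).aestronglyMeasurable)
  · exact ((ω τ).le_of_opNorm_le_of_le le_rfl (hL τ)).trans (le_abs_self _)

theorem integral_clm_apply_deriv_eq_sub {ω' : ℝ → V →L[ℝ] ℝ} {b b' : ℝ → V}
    (hω : ∀ τ, HasDerivAt ω (ω' τ) τ) (hω' : IntervalIntegrable ω' volume s t)
    (hb : ∀ τ, HasDerivAt b (b' τ) τ) (hL : ∀ τ, ‖b' τ‖ ≤ L) :
    ∫ τ in s..t, ω τ (b' τ) = ω t (b t) - ω s (b s) - ∫ τ in s..t, ω' τ (b τ) := by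
  have hωc : Continuous ω := continuous_iff_continuousAt.2 fun τ => (hω τ).continuousAt
  have hbc : Continuous b := continuous_iff_continuousAt.2 fun τ => (hb τ).continuousAt
  have hint := intervalIntegrable_clm_apply_deriv (hωc.intervalIntegrable s t) hb hL
  have hint' := intervalIntegrable_clm_apply hω' hbc
  rw [← intervalIntegral.integral_eq_sub_of_hasDerivAt (fun τ _ => (hω τ).clm_apply (hb τ))
    (hint'.add hint), intervalIntegral.integral_add hint' hint, add_sub_cancel_left]

theorem abs_integral_clm_apply_deriv_le {b b' : ℝ → V} {δ : ℝ} (hst : s ≤ t)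
    (hω : ContDiff ℝ 1 ω) (hb : ∀ τ, HasDerivAt b (b' τ) τ) (hL : ∀ τ, ‖b' τ‖ ≤ L)
    (hδ : ∀ τ, ‖b τ‖ ≤ δ) :
    |∫ τ in s..t, ω τ (b' τ)| ≤ (‖ω t‖ + ‖ω s‖ + ∫ τ in s..t, ‖deriv ω τ‖) * δ := by
  have hω' : |∫ τ in s..t, deriv ω τ (b τ)| ≤ (∫ τ in s..t, ‖deriv ω τ‖) * δ := by
    rw [← intervalIntegral.integral_mul_const]
    exact intervalIntegral.norm_integral_le_of_norm_le hst
      (.of_forall fun τ _ => (deriv ω τ).le_of_opNorm_le_of_le le_rfl (hδ τ))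
      (((hω.continuous_deriv le_rfl).norm.mul_const δ).intervalIntegrable s t)
  rw [integral_clm_apply_deriv_eq_sub (fun τ => (hω.differentiable one_ne_zero τ).hasDerivAt)
    ((hω.continuous_deriv le_rfl).intervalIntegrable s t) hb hL, add_mul, add_mul]
  refine (abs_sub _ _).trans (add_le_add ((abs_sub _ _).trans (add_le_add ?_ ?_)) hω')
  exacts [(ω t).le_of_opNorm_le_of_le le_rfl (hδ t), (ω s).le_of_opNorm_le_of_le le_rfl (hδ s)]

theorem exists_contDiff_integral_norm_sub_le {W : Type*} [NormedAddCommGroup W] [NormedSpace ℝ W]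
    {ω : ℝ → W} (hst : s ≤ t) (hω : IntervalIntegrable ω volume s t) {ε : ℝ} (hε : 0 < ε) :
    ∃ g : ℝ → W, ContDiff ℝ 1 g ∧ ∫ τ in s..t, ‖ω τ - g τ‖ ≤ ε := by
  have hω1 : MemLp ω 1 (volume.restrict (Ioc s t)) :=
    memLp_one_iff_integrable.2 ((intervalIntegrable_iff_integrableOn_Ioc_of_le hst).1 hω)
  obtain ⟨g, -, hg, hgε⟩ := hω1.exist_eLpNorm_sub_le ENNReal.one_ne_top le_rfl hε
  refine ⟨g, hg.of_le (by simp), ?_⟩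
  rw [eLpNorm_one_eq_lintegral_enorm] at hgε
  rw [intervalIntegral.integral_of_le hst]
  exact (integral_norm_eq_lintegral_enorm (hω1.aestronglyMeasurable.sub
    hg.continuous.aestronglyMeasurable)).trans_le (ENNReal.toReal_le_of_le_ofReal hε.le hgε)

/- Derivatives of uniformly small functions are weakly small: integrate by parts against a smooth
approximation of `ω`. -/
theorem tendsto_integral_clm_apply_deriv {b b' : ι → ℝ → V} {δ : ι → ℝ} (hst : s ≤ t)
    (hω : IntervalIntegrable ω volume s t) (hb : ∀ᶠ i in l, ∀ τ, HasDerivAt (b i) (b' i τ) τ)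
    (hL : ∀ᶠ i in l, ∀ τ, ‖b' i τ‖ ≤ L) (hbδ : ∀ᶠ i in l, ∀ τ, ‖b i τ‖ ≤ δ i)
    (hδ : Tendsto δ l (𝓝 0)) :
    Tendsto (fun i => ∫ τ in s..t, ω τ (b' i τ)) l (𝓝 0) := by
  refine Metric.tendsto_nhds.2 fun ε hε => ?_
  obtain ⟨g, hg, hωg⟩ := exists_contDiff_integral_norm_sub_le hst hω
    (show 0 < ε / 2 / (|L| + 1) by positivity)
  have hsmall : ∀ᶠ i in l, (‖g t‖ + ‖g s‖ + ∫ τ in s..t, ‖deriv g τ‖) * δ i < ε / 2 := by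
    refine (hδ.const_mul _).eventually_lt_const ?_
    rw [mul_zero]
    exact half_pos hε
  filter_upwards [hb, hL, hbδ, hsmall] with i hb hL hbδ hsmall
  have hgint := hg.continuous.intervalIntegrable (μ := volume) s t
  have herr : |∫ τ in s..t, (ω τ - g τ) (b' i τ)| ≤ ε / 2 / (|L| + 1) * (|L| + 1) := by
    grw [← hωg, ← intervalIntegral.integral_mul_const]
    exact intervalIntegral.norm_integral_le_of_norm_le hst
      (.of_forall fun τ _ => (ω τ - g τ).le_of_opNorm_le_of_le le_rfl
        ((hL τ).trans ((le_abs_self L).trans (lt_add_one _).le)))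
      ((hω.sub hgint).norm.mul_const _)
  rw [div_mul_cancel₀ _ (by positivity)] at herr
  have hsplit : ∫ τ in s..t, ω τ (b' i τ)
      = (∫ τ in s..t, (ω τ - g τ) (b' i τ)) + ∫ τ in s..t, g τ (b' i τ) := by
    rw [← intervalIntegral.integral_add (intervalIntegrable_clm_apply_deriv (hω.sub hgint) hb hL)
      (intervalIntegrable_clm_apply_deriv hgint hb hL)]
    simp only [sub_apply, sub_add_cancel]
  rw [Real.dist_eq, sub_zero, hsplit]
  linarith [abs_add_le (∫ τ in s..t, (ω τ - g τ) (b' i τ)) (∫ τ in s..t, g τ (b' i τ)),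
    abs_integral_clm_apply_deriv_le hst hg hb hL hbδ]

theorem tendsto_integral_clm_apply_deriv_of_tendsto [l.IsCountablyGenerated] [l.NeBot]
    {a : ι → ℝ → V →L[ℝ] ℝ} {b b' : ι → ℝ → V} {b₀ b₀' : ℝ → V} {C : ℝ} {δ : ι → ℝ}
    (hst : s ≤ t) (ha : ∀ᶠ i in l, Continuous (a i)) (haC : ∀ᶠ i in l, ∀ τ, ‖a i τ‖ ≤ C)
    (haω : ∀ τ, Tendsto (fun i => a i τ) l (𝓝 (ω τ)))
    (hb : ∀ᶠ i in l, ∀ τ, HasDerivAt (b i) (b' i τ) τ) (hL : ∀ᶠ i in l, ∀ τ, ‖b' i τ‖ ≤ L)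
    (hb₀ : ∀ τ, HasDerivAt b₀ (b₀' τ) τ) (hL₀ : ∀ τ, ‖b₀' τ‖ ≤ L)
    (hbδ : ∀ᶠ i in l, ∀ τ, ‖b i τ - b₀ τ‖ ≤ δ i) (hδ : Tendsto δ l (𝓝 0)) :
    Tendsto (fun i => ∫ τ in s..t, a i τ (b' i τ)) l (𝓝 (∫ τ in s..t, ω τ (b₀' τ))) := by
  have hω : IntervalIntegrable ω volume s t := intervalIntegrable_of_tendsto_of_norm_le ha haC haω
  have hωC : ∀ τ, ‖ω τ‖ ≤ C := fun τ => le_of_tendsto (haω τ).norm (haC.mono fun i hi => hi τ)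
  have hint : ∀ᶠ i in l, IntervalIntegrable (fun τ => (a i τ - ω τ) (b' i τ)) volume s t := by
    filter_upwards [ha, hb, hL] with i ha hb hL
    exact intervalIntegrable_clm_apply_deriv ((ha.intervalIntegrable s t).sub hω) hb hL
  have hstrong : Tendsto (fun i => ∫ τ in s..t, (a i τ - ω τ) (b' i τ)) l (𝓝 0) := by
    rw [← intervalIntegral.integral_zero (a := s) (b := t) (μ := volume)]
    refine intervalIntegral.tendsto_integral_filter_of_dominated_convergence (fun _ => (C + C) * L)
      (hint.mono fun i hi => hi.aestronglyMeasurable_restrict_uIoc) ?_ intervalIntegrable_const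
      (.of_forall fun τ _ => ?_)
    · filter_upwards [haC, hL] with i haC hL
      refine .of_forall fun τ _ => (a i τ - ω τ).le_of_opNorm_le_of_le ?_ (hL τ)
      exact (norm_sub_le _ _).trans (add_le_add (haC τ) (hωC τ))
    · refine squeeze_zero_norm' (a := fun i => ‖a i τ - ω τ‖ * L) (hL.mono fun i hi => ?_) ?_
      · exact (a i τ - ω τ).le_of_opNorm_le_of_le le_rfl (hi τ)
      · simpa using ((haω τ).sub_const (ω τ)).norm.mul_const L
  have hweak : Tendsto (fun i => ∫ τ in s..t, ω τ (b' i τ - b₀' τ)) l (𝓝 0) := by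
    refine tendsto_integral_clm_apply_deriv (L := L + L) hst hω
      (hb.mono fun i hi τ => (hi τ).sub (hb₀ τ)) (hL.mono fun i hi τ => ?_) hbδ hδ
    exact (norm_sub_le _ _).trans (add_le_add (hi τ) (hL₀ τ))
  have hsum := (hstrong.add hweak).add_const (∫ τ in s..t, ω τ (b₀' τ))
  rw [add_zero, zero_add] at hsum
  refine hsum.congr' ?_
  filter_upwards [hb, hL, hint] with i hb hL hint
  simp only [map_sub]
  rw [intervalIntegral.integral_sub (intervalIntegrable_clm_apply_deriv hω hb hL)
    (intervalIntegrable_clm_apply_deriv hω hb₀ hL₀), add_assoc, sub_add_cancel,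
    ← intervalIntegral.integral_add hint (intervalIntegrable_clm_apply_deriv hω hb hL)]
  simp only [sub_apply, sub_add_cancel]

end WeakConvergence

section BoundedPartialDerivs

open MeasureTheory

variable {V W : Type*} [NormedAddCommGroup V] [NormedSpace ℝ V] [NormedAddCommGroup W]
  [NormedSpace ℝ W]

/-- The family of curves `f x`, indexed by `x ∈ S`, has partial derivatives `f₁` in the parameter
`x` and `f₂` along the curves, both bounded by `L`. No continuity of the partial derivatives is
required. -/
structure HasBoundedPartialDerivs (f f₁ f₂ : ℝ → ℝ → W) (S : Set ℝ) (L : ℝ) : Prop where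
  hasDerivAt_param : ∀ x ∈ S, ∀ θ, HasDerivAt (fun y => f y θ) (f₁ x θ) x
  hasDerivAt_curve : ∀ x ∈ S, ∀ θ, HasDerivAt (f x) (f₂ x θ) θ
  norm_param_le : ∀ x ∈ S, ∀ θ, ‖f₁ x θ‖ ≤ L
  norm_curve_le : ∀ x ∈ S, ∀ θ, ‖f₂ x θ‖ ≤ L

namespace HasBoundedPartialDerivs

variable {f f₁ f₂ : ℝ → ℝ → W} {S : Set ℝ} {L x x₀ : ℝ}

theorem continuous (hf : HasBoundedPartialDerivs f f₁ f₂ S L) (hx : x ∈ S) : Continuous (f x) :=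
  continuous_iff_continuousAt.2 fun θ => (hf.hasDerivAt_curve x hx θ).continuousAt

theorem norm_sub_le (hf : HasBoundedPartialDerivs f f₁ f₂ S L) (hS : Convex ℝ S) (hx₀ : x₀ ∈ S)
    (hx : x ∈ S) (θ : ℝ) : ‖f x θ - f x₀ θ‖ ≤ L * ‖x - x₀‖ :=
  hS.norm_image_sub_le_of_norm_hasDerivWithin_le
    (fun y hy => (hf.hasDerivAt_param y hy θ).hasDerivWithinAt)
    (fun y hy => hf.norm_param_le y hy θ) hx₀ hx

theorem norm_slope_le (hf : HasBoundedPartialDerivs f f₁ f₂ S L) (hS : Convex ℝ S) (hx₀ : x₀ ∈ S)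
    (hx : x ∈ S) (hne : x ≠ x₀) (θ : ℝ) : ‖slope (fun y => f y θ) x₀ x‖ ≤ L := by
  have hpos : 0 < ‖x - x₀‖ := norm_pos_iff.2 (sub_ne_zero.2 hne)
  rw [slope_def_module, norm_smul, norm_inv, inv_mul_le_iff₀ hpos, mul_comm]
  exact hf.norm_sub_le hS hx₀ hx θ

theorem hasDerivAt_slope (hf : HasBoundedPartialDerivs f f₁ f₂ S L) (hx₀ : x₀ ∈ S) (hx : x ∈ S)
    (θ : ℝ) : HasDerivAt (fun θ => slope (fun y => f y θ) x₀ x)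
      (slope (fun y => f₂ y θ) x₀ x) θ := by
  simp only [slope_def_module]
  exact ((hf.hasDerivAt_curve x hx θ).sub (hf.hasDerivAt_curve x₀ hx₀ θ)).const_smul _

theorem continuous_slope (hf : HasBoundedPartialDerivs f f₁ f₂ S L) (hx₀ : x₀ ∈ S) (hx : x ∈ S) :
    Continuous fun θ => slope (fun y => f y θ) x₀ x :=
  continuous_iff_continuousAt.2 fun θ => (hf.hasDerivAt_slope hx₀ hx θ).continuousAt

theorem intervalIntegrable_curve [CompleteSpace W] (hf : HasBoundedPartialDerivs f f₁ f₂ S L)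
    (hx : x ∈ S) (s t : ℝ) : IntervalIntegrable (f₂ x) volume s t := by
  have hd : deriv (f x) = f₂ x := funext fun θ => (hf.hasDerivAt_curve x hx θ).deriv
  rw [← hd]
  refine (intervalIntegrable_const (c := L)).mono_fun
    (stronglyMeasurable_deriv _).aestronglyMeasurable (.of_forall fun θ => ?_)
  rw [hd]
  exact (hf.norm_curve_le x hx θ).trans (le_abs_self L)

theorem hasDerivAt_integral (hf : HasBoundedPartialDerivs f f₁ f₂ S L) (hS : Convex ℝ S)
    (hx₀ : S ∈ 𝓝 x₀) (s t : ℝ) :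
    HasDerivAt (fun x => ∫ θ in s..t, f x θ) (∫ θ in s..t, f₁ x₀ θ) x₀ := by
  have hx₀S := mem_of_mem_nhds hx₀
  have hS' : ∀ᶠ x in 𝓝[≠] x₀, x ∈ S ∧ x ≠ x₀ :=
    (eventually_nhdsWithin_of_eventually_nhds hx₀).and self_mem_nhdsWithin
  have hlim : Tendsto (fun x => ∫ θ in s..t, slope (fun y => f y θ) x₀ x) (𝓝[≠] x₀)
      (𝓝 (∫ θ in s..t, f₁ x₀ θ)) :=
    intervalIntegral.tendsto_integral_filter_of_dominated_convergence (fun _ => L)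
      (hS'.mono fun x hx => (hf.continuous_slope hx₀S hx.1).aestronglyMeasurable)
      (hS'.mono fun x hx => .of_forall fun θ _ => hf.norm_slope_le hS hx₀S hx.1 hx.2 θ)
      intervalIntegrable_const
      (.of_forall fun θ _ => (hf.hasDerivAt_param x₀ hx₀S θ).tendsto_slope)
  refine hasDerivAt_iff_tendsto_slope.2 (hlim.congr' (hS'.mono fun x hx => ?_))
  simp only [slope_def_module]
  rw [intervalIntegral.integral_smul, intervalIntegral.integral_sub
    ((hf.continuous hx.1).intervalIntegrable s t) ((hf.continuous hx₀S).intervalIntegrable s t)]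

end HasBoundedPartialDerivs

variable [CompleteSpace V] {A A₁ A₂ : ℝ → ℝ → V →L[ℝ] ℝ} {B B₁ B₂ : ℝ → ℝ → V} {S : Set ℝ}
  {L M x x₀ s t : ℝ}

theorem slope_integral_clm_apply_deriv (hA : HasBoundedPartialDerivs A A₁ A₂ S L)
    (hB : HasBoundedPartialDerivs B B₁ B₂ S M) (hx₀ : x₀ ∈ S) (hx : x ∈ S)
    (hAp : A x₀ s = A x₀ t) (hBp : ∀ x ∈ S, B x s = B x t) :
    slope (fun x => ∫ θ in s..t, A x θ (B₂ x θ)) x₀ x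
      = (∫ θ in s..t, slope (fun y => A y θ) x₀ x (B₂ x θ))
        - ∫ θ in s..t, A₂ x₀ θ (slope (fun y => B y θ) x₀ x) := by
  have hAint := (hA.continuous hx₀).intervalIntegrable (μ := volume) s t
  have hslope := (hA.continuous_slope hx₀ hx).intervalIntegrable (μ := volume) s t
  have hB₂ : ∀ θ, ‖slope (fun y => B₂ y θ) x₀ x‖ ≤ ‖(x - x₀)⁻¹‖ * (M + M) := fun θ => by
    rw [slope_def_module, norm_smul]
    gcongr
    exact (norm_sub_le _ _).trans (add_le_add (hB.norm_curve_le x hx θ) (hB.norm_curve_le x₀ hx₀ θ))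
  have hparts := integral_clm_apply_deriv_eq_sub (hA.hasDerivAt_curve x₀ hx₀)
    (hA.intervalIntegrable_curve hx₀ s t) (hB.hasDerivAt_slope hx₀ hx) hB₂
  rw [hAp, slope_def_module, slope_def_module, hBp x hx, hBp x₀ hx₀, sub_self, zero_sub] at hparts
  rw [sub_eq_add_neg, ← hparts, ← intervalIntegral.integral_add
    (intervalIntegrable_clm_apply_deriv hslope (hB.hasDerivAt_curve x hx) (hB.norm_curve_le x hx))
    (intervalIntegrable_clm_apply_deriv hAint (hB.hasDerivAt_slope hx₀ hx) hB₂),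
    slope_def_module, ← intervalIntegral.integral_sub
    (intervalIntegrable_clm_apply_deriv ((hA.continuous hx).intervalIntegrable s t)
      (hB.hasDerivAt_curve x hx) (hB.norm_curve_le x hx))
    (intervalIntegrable_clm_apply_deriv hAint (hB.hasDerivAt_curve x₀ hx₀)
      (hB.norm_curve_le x₀ hx₀)), ← intervalIntegral.integral_smul]
  refine intervalIntegral.integral_congr fun θ _ => ?_
  simp only [slope_def_module, smul_apply, sub_apply,
    map_smul, map_sub, ← smul_add, sub_add_sub_cancel]

theorem hasDerivAt_integral_clm_apply_deriv (hA : HasBoundedPartialDerivs A A₁ A₂ S L)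
    (hB : HasBoundedPartialDerivs B B₁ B₂ S M) (hS : Convex ℝ S) (hx₀ : S ∈ 𝓝 x₀) (hst : s ≤ t)
    (hAp : A x₀ s = A x₀ t) (hBp : ∀ x ∈ S, B x s = B x t) :
    HasDerivAt (fun x => ∫ θ in s..t, A x θ (B₂ x θ))
      (∫ θ in s..t, (A₁ x₀ θ (B₂ x₀ θ) - A₂ x₀ θ (B₁ x₀ θ))) x₀ := by
  have hx₀S := mem_of_mem_nhds hx₀
  have hS' : ∀ᶠ x in 𝓝[≠] x₀, x ∈ S ∧ x ≠ x₀ :=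
    (eventually_nhdsWithin_of_eventually_nhds hx₀).and self_mem_nhdsWithin
  have hAc := hS'.mono fun x hx => hA.continuous_slope hx₀S hx.1
  have hBc := hS'.mono fun x hx => hB.continuous_slope hx₀S hx.1
  have hAL : ∀ᶠ x in 𝓝[≠] x₀, ∀ θ, ‖slope (fun y => A y θ) x₀ x‖ ≤ L :=
    hS'.mono fun x hx => hA.norm_slope_le hS hx₀S hx.1 hx.2
  have hBL : ∀ᶠ x in 𝓝[≠] x₀, ∀ θ, ‖slope (fun y => B y θ) x₀ x‖ ≤ M :=
    hS'.mono fun x hx => hB.norm_slope_le hS hx₀S hx.1 hx.2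
  have hA₁ := fun θ => (hA.hasDerivAt_param x₀ hx₀S θ).tendsto_slope
  have hB₁ := fun θ => (hB.hasDerivAt_param x₀ hx₀S θ).tendsto_slope
  have hdist : Tendsto (fun x => M * ‖x - x₀‖) (𝓝[≠] x₀) (𝓝 0) := by
    have : Tendsto (fun x => M * ‖x - x₀‖) (𝓝 x₀) (𝓝 (M * ‖x₀ - x₀‖)) :=
      Continuous.tendsto (by fun_prop) x₀
    simpa using this.mono_left nhdsWithin_le_nhds
  have hfst : Tendsto (fun x => ∫ θ in s..t, slope (fun y => A y θ) x₀ x (B₂ x θ)) (𝓝[≠] x₀)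
      (𝓝 (∫ θ in s..t, A₁ x₀ θ (B₂ x₀ θ))) :=
    tendsto_integral_clm_apply_deriv_of_tendsto hst hAc hAL hA₁
      (hS'.mono fun x hx => hB.hasDerivAt_curve x hx.1)
      (hS'.mono fun x hx => hB.norm_curve_le x hx.1)
      (hB.hasDerivAt_curve x₀ hx₀S) (hB.norm_curve_le x₀ hx₀S)
      (hS'.mono fun x hx => hB.norm_sub_le hS hx₀S hx.1) hdist
  have hA₂ := hA.intervalIntegrable_curve hx₀S s t
  have hsnd := tendsto_integral_clm_apply_of_tendsto hA₂ hBc hBL hB₁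
  rw [hasDerivAt_iff_tendsto_slope, intervalIntegral.integral_sub]
  · refine (hfst.sub hsnd).congr' ?_
    filter_upwards [hS'] with x hx
    exact (slope_integral_clm_apply_deriv hA hB hx₀S hx.1 hAp hBp).symm
  · exact intervalIntegrable_clm_apply_deriv
      (intervalIntegrable_of_tendsto_of_norm_le hAc hAL hA₁)
      (hB.hasDerivAt_curve x₀ hx₀S) (hB.norm_curve_le x₀ hx₀S)
  · exact intervalIntegrable_clm_apply_of_tendsto hA₂ hBc hBL hB₁

end BoundedPartialDerivs

section PolarCoordinates

variable {W : Type*} [NormedAddCommGroup W] [NormedSpace ℝ W] {f : ℂ → W} {c : ℂ} {ρ L : ℝ}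

theorem hasDerivAt_circleMap_radius (c : ℂ) (r θ : ℝ) :
    HasDerivAt (fun r => circleMap c r θ) (circleMap 0 1 θ) r := by
  simpa [circleMap] using ((Complex.ofRealCLM.hasDerivAt (x := r)).mul_const _).const_add c

theorem circleMap_mem_ball {r : ℝ} (hr : r ∈ Ioo (-ρ) ρ) (θ : ℝ) : circleMap c r θ ∈ ball c ρ := by
  simpa [circleMap, abs_lt] using hr

theorem hasBoundedPartialDerivs_comp_circleMap (hf : ∀ ζ ∈ ball c ρ, DifferentiableAt ℝ f ζ)
    (hL : ∀ ζ ∈ ball c ρ, ‖fderiv ℝ f ζ‖ ≤ L) :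
    HasBoundedPartialDerivs (fun r θ => f (circleMap c r θ))
      (fun r θ => fderiv ℝ f (circleMap c r θ) (circleMap 0 1 θ))
      (fun r θ => fderiv ℝ f (circleMap c r θ) (circleMap 0 r θ * Complex.I))
      (Ioo (-ρ) ρ) (L * max 1 ρ) where
  hasDerivAt_param r hr θ := (hf _ (circleMap_mem_ball hr θ)).hasFDerivAt.comp_hasDerivAt r
    (hasDerivAt_circleMap_radius c r θ)
  hasDerivAt_curve r hr θ := (hf _ (circleMap_mem_ball hr θ)).hasFDerivAt.comp_hasDerivAt θ
    (hasDerivAt_circleMap c r θ)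
  norm_param_le r hr θ := (fderiv ℝ f _).le_of_opNorm_le_of_le (hL _ (circleMap_mem_ball hr θ))
    (by simp)
  norm_curve_le r hr θ := (fderiv ℝ f _).le_of_opNorm_le_of_le (hL _ (circleMap_mem_ball hr θ))
    (by simpa using .inr (abs_lt.2 hr).le)

theorem hasDerivAt_circleAverage {g : ℂ → ℝ} {r : ℝ} (hg : ∀ ζ ∈ ball c ρ, DifferentiableAt ℝ g ζ)
    (hL : ∀ ζ ∈ ball c ρ, ‖fderiv ℝ g ζ‖ ≤ L) (hr : r ∈ Ioo (-ρ) ρ) :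
    HasDerivAt (Real.circleAverage g c) ((2 * Real.pi)⁻¹ *
      ∫ θ in (0)..2 * Real.pi, fderiv ℝ g (circleMap c r θ) (circleMap 0 1 θ)) r :=
  ((hasBoundedPartialDerivs_comp_circleMap hg hL).hasDerivAt_integral (convex_Ioo _ _)
    (Ioo_mem_nhds hr.1 hr.2) _ _).const_mul _

end PolarCoordinates

section SubMeanValue

variable {V : Type*} [NormedAddCommGroup V] [NormedSpace ℂ V] {J : V → V →L[ℝ] V} {Ψ : V → ℝ}
  {h : ℂ → V} {U : Set ℂ} {c ζ : ℂ} {r ρ R L M N : ℝ} {y : V}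

theorem IsHolomorphicMapOn.fderiv_mul_I (hh : IsHolomorphicMapOn (fun _ => Jst ℂ) J h U)
    (hζ : ζ ∈ U) (v : ℂ) : fderiv ℝ h ζ (v * Complex.I) = J (h ζ) (fderiv ℝ h ζ v) := by
  simpa [Jst, mul_comm] using DFunLike.congr_fun (hh ζ hζ).2 v

/-- The form `d^c Ψ = -J⋆dΨ`, whose differential is the Levi form of `Ψ`. -/
def dcForm (J : V → V →L[ℝ] V) (Ψ : V → ℝ) (y : V) : V →L[ℝ] ℝ :=
  -(fderiv ℝ Ψ y).comp (J y)

theorem leviForm_eq_fderiv_dcForm (J : V → V →L[ℝ] V) (Ψ : V → ℝ) (y X : V) :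
    leviForm J Ψ y X
      = fderiv ℝ (dcForm J Ψ) y X (J y X) - fderiv ℝ (dcForm J Ψ) y (J y X) X := by
  unfold dcForm leviForm
  rw [fderiv_fun_neg]
  simp only [neg_apply]
  ring

theorem dcForm_apply_self (hJ : (J y).comp (J y) = -ContinuousLinearMap.id ℝ V) (X : V) :
    dcForm J Ψ y (J y X) = fderiv ℝ Ψ y X := by
  have hX : J y (J y X) = -X := DFunLike.congr_fun hJ X
  simp [dcForm, hX]

theorem contDiffAt_dcForm (hJ : ContDiffAt ℝ 1 J y) (hΨ : ContDiffAt ℝ 2 Ψ y) :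
    ContDiffAt ℝ 1 (dcForm J Ψ) y :=
  ((hΨ.fderiv_right (m := 1) (by norm_num)).clm_comp hJ).neg

/-- `Ψ` is `C²` and `J`-plurisubharmonic at the points of `S`. -/
structure IsC2PSHOn (J : V → V →L[ℝ] V) (Ψ : V → ℝ) (S : Set V) : Prop where
  contDiffAt : ∀ y ∈ S, ContDiffAt ℝ 2 Ψ y
  pshOn : PSHOn J Ψ S

/-- `h` is a `J`-holomorphic curve on `U` whose derivative is locally bounded. Holomorphic maps are
only required to be differentiable, so the second condition is not automatic. -/
structure IsLocLipschitzCurveOn (J : V → V →L[ℝ] V) (h : ℂ → V) (U : Set ℂ) : Prop where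
  holomorphic : IsHolomorphicMapOn (fun _ => Jst ℂ) J h U
  isBoundedUnder : ∀ ζ ∈ U, (𝓝 ζ).IsBoundedUnder (· ≤ ·) fun ξ => ‖fderiv ℝ h ξ‖

theorem IsLocLipschitzCurveOn.mono {U' : Set ℂ} (hh : IsLocLipschitzCurveOn J h U) (hU : U' ⊆ U) :
    IsLocLipschitzCurveOn J h U' :=
  ⟨fun ζ hζ => hh.holomorphic ζ (hU hζ), fun ζ hζ => hh.isBoundedUnder ζ (hU hζ)⟩

theorem IsC2PSHOn.mono {S T : Set V} (hΨ : IsC2PSHOn J Ψ T) (hST : S ⊆ T) : IsC2PSHOn J Ψ S :=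
  ⟨fun y hy => hΨ.contDiffAt y (hST hy), fun y hy => hΨ.pshOn y (hST hy)⟩

theorem exists_forall_le_of_isBoundedUnder_nhds {X : Type*} [TopologicalSpace X] {K : Set X}
    {f : X → ℝ} (hK : IsCompact K) (hf : ∀ x ∈ K, (𝓝 x).IsBoundedUnder (· ≤ ·) f) :
    ∃ C, ∀ x ∈ K, f x ≤ C := by
  refine hK.induction_on ⟨0, by simp⟩ (fun s t hst ⟨C, hC⟩ => ⟨C, fun x hx => hC x (hst hx)⟩)
    (fun s t ⟨C, hC⟩ ⟨C', hC'⟩ => ⟨max C C', fun x hx => ?_⟩) fun x hx => ?_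
  · exact hx.elim (fun hx => le_max_of_le_left (hC x hx)) fun hx => le_max_of_le_right (hC' x hx)
  · obtain ⟨C, hC⟩ := hf x hx
    exact ⟨_, mem_nhdsWithin_of_mem_nhds (eventually_map.1 hC), C, fun y hy => hy⟩

variable [CompleteSpace V]

theorem hasDerivAt_integral_dcForm (hh : IsHolomorphicMapOn (fun _ => Jst ℂ) J h (ball c ρ))
    (hL : ∀ ζ ∈ ball c ρ, ‖fderiv ℝ h ζ‖ ≤ L)
    (hα : ∀ ζ ∈ ball c ρ, DifferentiableAt ℝ (dcForm J Ψ) (h ζ))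
    (hM : ∀ ζ ∈ ball c ρ, ‖fderiv ℝ (dcForm J Ψ) (h ζ)‖ ≤ M) (hr : r ∈ Ioo (-ρ) ρ) :
    HasDerivAt
      (fun r => ∫ θ in (0)..2 * Real.pi, dcForm J Ψ (h (circleMap c r θ))
        (fderiv ℝ h (circleMap c r θ) (circleMap 0 r θ * Complex.I)))
      (∫ θ in (0)..2 * Real.pi, r * leviForm J Ψ (h (circleMap c r θ))
        (fderiv ℝ h (circleMap c r θ) (circleMap 0 1 θ))) r := by
  have hfd : ∀ ζ ∈ ball c ρ, fderiv ℝ (fun ζ => dcForm J Ψ (h ζ)) ζ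
      = (fderiv ℝ (dcForm J Ψ) (h ζ)).comp (fderiv ℝ h ζ) := fun ζ hζ =>
    fderiv_comp ζ (hα ζ hζ) (hh ζ hζ).1
  have hB := hasBoundedPartialDerivs_comp_circleMap (fun ζ hζ => (hh ζ hζ).1) hL
  have hA := hasBoundedPartialDerivs_comp_circleMap (f := fun ζ => dcForm J Ψ (h ζ)) (L := M * L)
    (fun ζ hζ => (hα ζ hζ).comp ζ (hh ζ hζ).1) (fun ζ hζ => by
      rw [hfd ζ hζ]
      exact (ContinuousLinearMap.opNorm_comp_le _ _).trans (mul_le_mul (hM ζ hζ) (hL ζ hζ)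
        (norm_nonneg _) ((norm_nonneg (fderiv ℝ (dcForm J Ψ) (h ζ))).trans (hM ζ hζ))))
  have hper : ∀ r, circleMap c r 0 = circleMap c r (2 * Real.pi) := fun r => by simp [circleMap]
  convert hasDerivAt_integral_clm_apply_deriv hA hB (convex_Ioo _ _) (Ioo_mem_nhds hr.1 hr.2)
    Real.two_pi_pos.le (by rw [hper]) (fun r _ => by rw [hper]) using 1
  refine intervalIntegral.integral_congr fun θ _ => ?_
  have hζ := circleMap_mem_ball (c := c) hr θ
  have hr : circleMap 0 r θ = r • circleMap 0 1 θ := by simp [circleMap]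
  simp only [hfd _ hζ, hh.fderiv_mul_I hζ, hr, ContinuousLinearMap.comp_apply, map_smul,
    leviForm_eq_fderiv_dcForm, smul_apply, smul_eq_mul, mul_sub]

theorem integral_dcForm_nonneg (hh : IsHolomorphicMapOn (fun _ => Jst ℂ) J h (ball c ρ))
    (hL : ∀ ζ ∈ ball c ρ, ‖fderiv ℝ h ζ‖ ≤ L)
    (hα : ∀ ζ ∈ ball c ρ, DifferentiableAt ℝ (dcForm J Ψ) (h ζ))
    (hM : ∀ ζ ∈ ball c ρ, ‖fderiv ℝ (dcForm J Ψ) (h ζ)‖ ≤ M)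
    (hΨ : PSHOn J Ψ (h '' ball c ρ)) (hr : r ∈ Ico 0 ρ) :
    0 ≤ ∫ θ in (0)..2 * Real.pi, dcForm J Ψ (h (circleMap c r θ))
      (fderiv ℝ h (circleMap c r θ) (circleMap 0 r θ * Complex.I)) := by
  have hsub : Ico 0 ρ ⊆ Ioo (-ρ) ρ := fun x hx => ⟨by linarith [hx.1, hx.2], hx.2⟩
  have hderiv := fun x (hx : x ∈ Ico 0 ρ) =>
    hasDerivAt_integral_dcForm hh hL hα hM (hsub hx)
  have hmono := monotoneOn_of_hasDerivWithinAt_nonneg (convex_Ico 0 ρ)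
    (fun x hx => (hderiv x hx).continuousAt.continuousWithinAt)
    (fun x hx => (hderiv x (interior_subset hx)).hasDerivWithinAt) fun x hx => by
      have hx := interior_subset hx
      exact intervalIntegral.integral_nonneg Real.two_pi_pos.le fun θ _ => mul_nonneg hx.1
        (hΨ _ (mem_image_of_mem h (circleMap_mem_ball (hsub hx) θ)) _)
  simpa using hmono ⟨le_rfl, hr.1.trans_lt hr.2⟩ hr hr.1

theorem integral_fderiv_comp_nonneg (hh : IsHolomorphicMapOn (fun _ => Jst ℂ) J h (ball c ρ))
    (hsq : ∀ ζ ∈ ball c ρ, (J (h ζ)).comp (J (h ζ)) = -ContinuousLinearMap.id ℝ V)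
    (hL : ∀ ζ ∈ ball c ρ, ‖fderiv ℝ h ζ‖ ≤ L)
    (hα : ∀ ζ ∈ ball c ρ, DifferentiableAt ℝ (dcForm J Ψ) (h ζ))
    (hM : ∀ ζ ∈ ball c ρ, ‖fderiv ℝ (dcForm J Ψ) (h ζ)‖ ≤ M)
    (hΨd : ∀ ζ ∈ ball c ρ, DifferentiableAt ℝ Ψ (h ζ))
    (hΨ : PSHOn J Ψ (h '' ball c ρ)) (hr : r ∈ Ioo 0 ρ) :
    0 ≤ ∫ θ in (0)..2 * Real.pi, fderiv ℝ (Ψ ∘ h) (circleMap c r θ) (circleMap 0 1 θ) := by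
  have hpos := integral_dcForm_nonneg hh hL hα hM hΨ (Ioo_subset_Ico_self hr)
  refine nonneg_of_mul_nonneg_right (hpos.trans_eq ?_) hr.1
  rw [← intervalIntegral.integral_const_mul]
  refine intervalIntegral.integral_congr fun θ _ => ?_
  have hζ := circleMap_mem_ball (c := c) (θ := θ)
    (⟨by linarith [hr.1, hr.2], hr.2⟩ : r ∈ Ioo (-ρ) ρ)
  have hcircle : circleMap 0 r θ = r • circleMap 0 1 θ := by simp [circleMap]
  simp only [hh.fderiv_mul_I hζ, dcForm_apply_self (hsq _ hζ), fderiv_comp _ (hΨd _ hζ) (hh _ hζ).1,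
    hcircle, ContinuousLinearMap.comp_apply, map_smul, smul_eq_mul]

theorem monotoneOn_circleAverage_comp_of_norm_fderiv_le
    (hh : IsHolomorphicMapOn (fun _ => Jst ℂ) J h (ball c ρ))
    (hsq : ∀ ζ ∈ ball c ρ, (J (h ζ)).comp (J (h ζ)) = -ContinuousLinearMap.id ℝ V)
    (hL : ∀ ζ ∈ ball c ρ, ‖fderiv ℝ h ζ‖ ≤ L)
    (hα : ∀ ζ ∈ ball c ρ, DifferentiableAt ℝ (dcForm J Ψ) (h ζ))
    (hM : ∀ ζ ∈ ball c ρ, ‖fderiv ℝ (dcForm J Ψ) (h ζ)‖ ≤ M)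
    (hΨd : ∀ ζ ∈ ball c ρ, DifferentiableAt ℝ Ψ (h ζ))
    (hN : ∀ ζ ∈ ball c ρ, ‖fderiv ℝ Ψ (h ζ)‖ ≤ N) (hΨ : PSHOn J Ψ (h '' ball c ρ)) :
    MonotoneOn (Real.circleAverage (Ψ ∘ h) c) (Ico 0 ρ) := by
  have hNL : ∀ ζ ∈ ball c ρ, ‖fderiv ℝ (Ψ ∘ h) ζ‖ ≤ N * L := fun ζ hζ => by
    rw [fderiv_comp ζ (hΨd ζ hζ) (hh ζ hζ).1]
    exact (ContinuousLinearMap.opNorm_comp_le _ _).trans (mul_le_mul (hN ζ hζ) (hL ζ hζ)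
      (norm_nonneg _) ((norm_nonneg (fderiv ℝ Ψ (h ζ))).trans (hN ζ hζ)))
  have hderiv := fun r (hr : r ∈ Ico 0 ρ) => hasDerivAt_circleAverage (c := c) (r := r)
    (fun ζ hζ => (hΨd ζ hζ).comp ζ (hh ζ hζ).1) hNL ⟨by linarith [hr.1, hr.2], hr.2⟩
  refine monotoneOn_of_hasDerivWithinAt_nonneg (convex_Ico 0 ρ)
    (fun r hr => (hderiv r hr).continuousAt.continuousWithinAt)
    (fun r hr => (hderiv r (interior_subset hr)).hasDerivWithinAt) fun r hr => ?_
  rw [interior_Ico] at hr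
  exact mul_nonneg (by positivity) (integral_fderiv_comp_nonneg hh hsq hL hα hM hΨd hΨ hr)

theorem monotoneOn_circleAverage_comp (hh : IsLocLipschitzCurveOn J h (ball c R))
    (hsq : ∀ ζ ∈ ball c R, (J (h ζ)).comp (J (h ζ)) = -ContinuousLinearMap.id ℝ V)
    (hJ : ∀ ζ ∈ ball c R, ContDiffAt ℝ 1 J (h ζ)) (hΨ : IsC2PSHOn J Ψ (h '' ball c R)) :
    MonotoneOn (Real.circleAverage (Ψ ∘ h) c) (Ico 0 R) := by
  intro a ha b hb hab
  obtain ⟨ρ, hbρ, hρR⟩ := exists_between hb.2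
  have hK : closedBall c ρ ⊆ ball c R := closedBall_subset_ball hρR
  have hρ : ball c ρ ⊆ closedBall c ρ := ball_subset_closedBall
  have hhc : ∀ ζ ∈ closedBall c ρ, ContinuousAt h ζ := fun ζ hζ =>
    (hh.holomorphic ζ (hK hζ)).1.continuousAt
  have hΨ2 : ∀ ζ ∈ closedBall c ρ, ContDiffAt ℝ 2 Ψ (h ζ) := fun ζ hζ =>
    hΨ.contDiffAt (h ζ) (mem_image_of_mem h (hK hζ))
  have hα : ∀ ζ ∈ closedBall c ρ, ContDiffAt ℝ 1 (dcForm J Ψ) (h ζ) := fun ζ hζ =>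
    contDiffAt_dcForm (hJ ζ (hK hζ)) (hΨ2 ζ hζ)
  obtain ⟨L, hL⟩ := exists_forall_le_of_isBoundedUnder_nhds (isCompact_closedBall c ρ)
    fun ζ hζ => hh.isBoundedUnder ζ (hK hζ)
  have hα' : ContinuousOn (fun ζ => fderiv ℝ (dcForm J Ψ) (h ζ)) (closedBall c ρ) := fun ζ hζ =>
    (((hα ζ hζ).continuousAt_fderiv one_ne_zero).comp (hhc ζ hζ)).continuousWithinAt
  obtain ⟨M, hM⟩ := (isCompact_closedBall c ρ).bddAbove_image
    (hα'.norm (E := V →L[ℝ] V →L[ℝ] ℝ))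
  have hΨ' : ContinuousOn (fun ζ => fderiv ℝ Ψ (h ζ)) (closedBall c ρ) := fun ζ hζ =>
    (((hΨ2 ζ hζ).continuousAt_fderiv two_ne_zero).comp (hhc ζ hζ)).continuousWithinAt
  obtain ⟨N, hN⟩ := (isCompact_closedBall c ρ).bddAbove_image hΨ'.norm
  exact monotoneOn_circleAverage_comp_of_norm_fderiv_le
    (fun ζ hζ => hh.holomorphic ζ (hK (hρ hζ))) (fun ζ hζ => hsq ζ (hK (hρ hζ)))
    (fun ζ hζ => hL ζ (hρ hζ)) (fun ζ hζ => (hα ζ (hρ hζ)).differentiableAt one_ne_zero)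
    (fun ζ hζ => hM (mem_image_of_mem _ (hρ hζ)))
    (fun ζ hζ => (hΨ2 ζ (hρ hζ)).differentiableAt two_ne_zero)
    (fun ζ hζ => hN (mem_image_of_mem _ (hρ hζ)))
    (fun y hy => hΨ.pshOn y (image_mono (hρ.trans hK) hy))
    ⟨ha.1, hab.trans_lt hbρ⟩ ⟨hb.1, hbρ⟩ hab

theorem le_circleAverage_comp {Ω : Set V} (hΩ : IsOpen Ω) (hJ : IsACS Ω J)
    (hh : IsLocLipschitzCurveOn J h (ball c R)) (hmaps : MapsTo h (ball c R) Ω)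
    (hΨ : IsC2PSHOn J Ψ (h '' ball c R)) (hr : r ∈ Ico 0 R) :
    Ψ (h c) ≤ Real.circleAverage (Ψ ∘ h) c r := by
  have hmono := monotoneOn_circleAverage_comp hh (fun ζ hζ => hJ.sq _ (hmaps hζ))
    (fun ζ hζ => (hJ.smooth.contDiffAt (hΩ.mem_nhds (hmaps hζ))).of_le (by simp)) hΨ
  simpa using hmono ⟨le_rfl, hr.1.trans_lt hr.2⟩ hr hr.1

end SubMeanValue

section MaximumPrinciple

variable {u v g : ℂ → ℝ} {c z ζ : ℂ} {a B d m ρ : ℝ}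

/-- The local sub-mean value property at `c`: on small circles around `c` the average of `u`
is at least `u c`. -/
def IsSubMeanAt (u : ℂ → ℝ) (c : ℂ) : Prop :=
  ∀ᶠ ρ in 𝓝[>] (0 : ℝ), ContinuousOn u (closedBall c ρ) ∧ u c ≤ Real.circleAverage u c ρ

theorem IsSubMeanAt.add (hu : IsSubMeanAt u c) (hv : IsSubMeanAt v c) : IsSubMeanAt (u + v) c := by
  filter_upwards [hu, hv, self_mem_nhdsWithin] with ρ ⟨huc, hu⟩ ⟨hvc, hv⟩ hρ
  have hsub : sphere c |ρ| ⊆ closedBall c ρ := by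
    rw [abs_of_pos hρ]
    exact sphere_subset_closedBall
  rw [Real.circleAverage_add (huc.mono hsub).circleIntegrable' (hvc.mono hsub).circleIntegrable']
  exact ⟨huc.add hvc, add_le_add hu hv⟩

theorem isSubMeanAt_of_harmonicAt (hu : InnerProductSpace.HarmonicAt u c) : IsSubMeanAt u c := by
  obtain ⟨R, hR, hball⟩ := Metric.eventually_nhds_iff_ball.1 hu.eventually
  filter_upwards [Ioo_mem_nhdsGT hR] with ρ hρ
  have hsub : closedBall c ρ ⊆ ball c R := closedBall_subset_ball hρ.2
  refine ⟨fun z hz => (hball z (hsub hz)).1.continuousAt.continuousWithinAt, ?_⟩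
  refine (InnerProductSpace.HarmonicOnNhd.circleAverage_eq fun z hz => hball z (hsub ?_)).ge
  rwa [abs_of_pos hρ.1] at hz

theorem isSubMeanAt_const_mul_log_norm_sub (k : ℝ) (hc : c ≠ z) :
    IsSubMeanAt (fun ζ => k * Real.log ‖ζ - z‖) c := by
  have han : AnalyticAt ℂ (fun ζ : ℂ => ζ - z) c := by fun_prop
  exact isSubMeanAt_of_harmonicAt ((han.harmonicAt_log_norm (sub_ne_zero.2 hc)).const_smul (c := k))

theorem eq_of_forall_le_of_le_circleAverage (hu : ContinuousOn u (sphere c ρ))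
    (hm : ∀ z ∈ sphere c ρ, u z ≤ m) (hmean : m ≤ Real.circleAverage u c ρ) (hρ : 0 < ρ)
    (hz : z ∈ sphere c ρ) : u z = m := by
  by_contra hne
  obtain ⟨θ, hθ, hθz⟩ : z ∈ circleMap c ρ '' Ioc 0 (2 * Real.pi) := by
    rwa [image_circleMap_Ioc, abs_of_pos hρ]
  have hmem : ∀ θ, circleMap c ρ θ ∈ sphere c ρ := circleMap_mem_sphere c hρ.le
  have hlt := intervalIntegral.integral_lt_integral_of_continuousOn_of_le_of_exists_lt
    Real.two_pi_pos (hu.comp_continuous (continuous_circleMap c ρ) hmem).continuousOn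
    (continuousOn_const (c := m)) (fun θ _ => hm _ (hmem θ))
    ⟨θ, Ioc_subset_Icc_self hθ, by simpa [hθz] using (hm z hz).lt_of_ne hne⟩
  rw [intervalIntegral.integral_const, sub_zero, smul_eq_mul] at hlt
  rw [Real.circleAverage, smul_eq_mul, inv_mul_eq_div, le_div_iff₀' Real.two_pi_pos] at hmean
  exact hlt.not_ge hmean

theorem IsSubMeanAt.eventually_eq_of_isLocalMax (hu : IsSubMeanAt u c) (hmax : IsLocalMax u c) :
    ∀ᶠ z in 𝓝 c, u z = u c := by
  obtain ⟨ε, hε, hball⟩ := Metric.eventually_nhds_iff_ball.1 hmax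
  obtain ⟨δ, hδ, hu⟩ := (mem_nhdsGT_iff_exists_Ioo_subset.1
    (inter_mem hu (Ioo_mem_nhdsGT hε)))
  filter_upwards [ball_mem_nhds c hδ] with z hz
  rcases eq_or_ne z c with rfl | hzc
  · rfl
  obtain ⟨⟨hcont, hmean⟩, hzε⟩ := hu ⟨dist_pos.2 hzc, hz⟩
  exact eq_of_forall_le_of_le_circleAverage (hcont.mono sphere_subset_closedBall)
    (fun w hw => hball w ((mem_sphere.1 hw).trans_lt hzε.2)) hmean (dist_pos.2 hzc) rfl

/- A maximum point with largest real part cannot lie in the interior, since the function would be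
constant near it. -/
theorem le_of_forall_frontier_le {K : Set ℂ} (hK : IsCompact K) (hu : ContinuousOn u K)
    (hloc : ∀ z ∈ interior K, IsLocalMax u z → ∀ᶠ w in 𝓝 z, u w = u z)
    (hm : ∀ z ∈ frontier K, u z ≤ m) (hζ : ζ ∈ K) : u ζ ≤ m := by
  obtain ⟨z₀, hz₀, hmax₀⟩ := hK.exists_isMaxOn ⟨ζ, hζ⟩ hu
  have hA : IsCompact (K ∩ u ⁻¹' {u z₀}) := hK.of_isClosed_subset
    (hu.preimage_isClosed_of_isClosed hK.isClosed isClosed_singleton) inter_subset_left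
  obtain ⟨z, ⟨hzK, hzu : u z = u z₀⟩, hzmax⟩ := hA.exists_isMaxOn ⟨z₀, hz₀, rfl⟩
    Complex.continuous_re.continuousOn
  have hle : ∀ w ∈ K, u w ≤ u z := fun w hw => hzu ▸ hmax₀ hw
  by_cases hzint : z ∈ interior K
  · have hKz : K ∈ 𝓝 z := mem_interior_iff_mem_nhds.1 hzint
    obtain ⟨δ, hδ, hball⟩ := Metric.eventually_nhds_iff_ball.1
      ((hloc z hzint (mem_of_superset hKz hle)).and hKz)
    have hw := hball (z + (δ / 2 : ℝ)) (by simp [abs_of_pos hδ, hδ])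
    have hre : (z + (δ / 2 : ℝ)).re ≤ z.re := hzmax ⟨hw.2, hw.1.trans hzu⟩
    simp only [Complex.add_re, Complex.ofReal_re] at hre
    linarith
  · exact (hle ζ hζ).trans (hm z ⟨subset_closure hzK, hzint⟩)

theorem continuousAt_mul_rpow_norm_sub (hg : g =O[𝓝 z] fun ζ => ‖ζ - z‖ ^ 2) (ha : a < 2) :
    ContinuousAt (fun ζ => g ζ * ‖ζ - z‖ ^ (-a)) z := by
  have hgz : g z = 0 := by simpa using hg.eq_zero_imp.self_of_nhds
  have hlim : Tendsto (fun ζ => ‖ζ - z‖ ^ (2 - a)) (𝓝 z) (𝓝 0) := by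
    have : ContinuousAt (fun ζ => ‖ζ - z‖ ^ (2 - a)) z :=
      ContinuousAt.rpow_const (by fun_prop) (.inr (by linarith))
    simpa [ContinuousAt, Real.zero_rpow (sub_pos.2 ha).ne'] using this
  have hbound : (fun ζ => g ζ * ‖ζ - z‖ ^ (-a)) =O[𝓝 z] fun ζ => ‖ζ - z‖ ^ (2 - a) := by
    refine (hg.mul (isBigO_refl _ _)).congr_right fun ζ => ?_
    rw [← Real.rpow_two, ← Real.rpow_add' (norm_nonneg _) (by linarith), sub_eq_add_neg 2]
  rw [ContinuousAt, hgz, zero_mul]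
  exact hbound.trans_tendsto hlim

theorem eventually_eq_of_isLocalMax_mul_rpow_norm_sub (hg0 : ∀ᶠ ζ in 𝓝 c, 0 ≤ g ζ)
    (hgc : ContinuousAt g c) (hlog : g c ≠ 0 → IsSubMeanAt (fun ζ => Real.log (g ζ)) c)
    (hgz : g z = 0) (hmax : IsLocalMax (fun ζ => g ζ * ‖ζ - z‖ ^ (-a)) c) :
    ∀ᶠ ζ in 𝓝 c, g ζ * ‖ζ - z‖ ^ (-a) = g c * ‖c - z‖ ^ (-a) := by
  rcases eq_or_ne (g c) 0 with hgc0 | hgc0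
  · filter_upwards [hmax, hg0] with ζ hζ hζ0
    rw [hgc0, zero_mul] at hζ ⊢
    exact hζ.antisymm (by positivity)
  have hcz : c ≠ z := fun h => hgc0 (h ▸ hgz)
  set w : ℂ → ℝ := fun ζ => Real.log (g ζ) + -a * Real.log ‖ζ - z‖ with hw
  have hexp : ∀ᶠ ζ in 𝓝 c, g ζ * ‖ζ - z‖ ^ (-a) = Real.exp (w ζ) := by
    filter_upwards [hg0, hgc.eventually_ne hgc0, eventually_ne_nhds hcz] with ζ hζ0 hζ hζz
    rw [hw, Real.exp_add, Real.exp_log (hζ0.lt_of_ne' hζ), mul_comm (-a),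
      Real.rpow_def_of_pos (norm_pos_iff.2 (sub_ne_zero.2 hζz))]
  have hwmax : IsLocalMax w c := by
    filter_upwards [hmax, hexp] with ζ hζ hζe
    rwa [hζe, hexp.self_of_nhds, Real.exp_le_exp] at hζ
  filter_upwards [hexp, ((hlog hgc0).add
    (isSubMeanAt_const_mul_log_norm_sub (-a) hcz)).eventually_eq_of_isLocalMax hwmax] with ζ hζ hwζ
  rw [hζ, hexp.self_of_nhds]
  exact congrArg Real.exp hwζ

theorem mul_rpow_norm_sub_le (hg0 : ∀ ζ ∈ closedBall z d, 0 ≤ g ζ)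
    (hgc : ContinuousOn g (closedBall z d)) (hgz : g =O[𝓝 z] fun ζ => ‖ζ - z‖ ^ 2)
    (hlog : ∀ ζ ∈ ball z d, g ζ ≠ 0 → IsSubMeanAt (fun ζ => Real.log (g ζ)) ζ)
    (hB : ∀ ζ ∈ sphere z d, g ζ ≤ B) (hd : 0 < d) (ha : a < 2) (hζ : ζ ∈ closedBall z d) :
    g ζ * ‖ζ - z‖ ^ (-a) ≤ B * d ^ (-a) := by
  have hgz0 : g z = 0 := by simpa using hgz.eq_zero_imp.self_of_nhds
  refine le_of_forall_frontier_le (u := fun ζ => g ζ * ‖ζ - z‖ ^ (-a)) (isCompact_closedBall z d)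
    (fun ξ hξ => ?_) (fun ξ hξ hmax => ?_) (fun ξ hξ => ?_) hζ
  · rcases eq_or_ne ξ z with rfl | hξz
    · exact (continuousAt_mul_rpow_norm_sub hgz ha).continuousWithinAt
    · have hcont : ContinuousAt (fun ζ => ‖ζ - z‖ ^ (-a)) ξ :=
        ContinuousAt.rpow_const (by fun_prop) (.inl (norm_ne_zero_iff.2 (sub_ne_zero.2 hξz)))
      exact (hgc ξ hξ).mul hcont.continuousWithinAt
  · rw [interior_closedBall _ hd.ne'] at hξ
    have hnhds := mem_of_superset (isOpen_ball.mem_nhds hξ) ball_subset_closedBall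
    exact eventually_eq_of_isLocalMax_mul_rpow_norm_sub (mem_of_superset hnhds hg0)
      (hgc.continuousAt hnhds) (hlog ξ hξ) hgz0 hmax
  · rw [frontier_closedBall _ hd.ne'] at hξ
    have hBξ := hB ξ hξ
    rw [mem_sphere, dist_eq_norm] at hξ
    rw [hξ]
    gcongr

/- The Schwarz lemma for functions with subharmonic logarithm: compare `log g` with
`a * log ‖ζ - z‖` for `a < 2`, and let `a` tend to `2`. -/
theorem le_mul_div_sq_of_isSubMeanAt_log (hg0 : ∀ ζ ∈ ball z d, 0 ≤ g ζ)
    (hgc : ContinuousOn g (ball z d)) (hgz : g =O[𝓝 z] fun ζ => ‖ζ - z‖ ^ 2)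
    (hlog : ∀ ζ ∈ ball z d, g ζ ≠ 0 → IsSubMeanAt (fun ζ => Real.log (g ζ)) ζ)
    (hB : ∀ ζ ∈ ball z d, g ζ ≤ B) (hζ : ζ ∈ ball z d) : g ζ ≤ B * (‖ζ - z‖ / d) ^ 2 := by
  rcases eq_or_ne ζ z with rfl | hζz
  · simpa using (hgz.eq_zero_imp.self_of_nhds (by simp)).le
  have hpos : 0 < ‖ζ - z‖ := norm_pos_iff.2 (sub_ne_zero.2 hζz)
  have hζd : ‖ζ - z‖ < d := by rwa [← dist_eq_norm]
  have hd : 0 < d := hpos.trans hζd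
  have hsmaller : ∀ d' ∈ Ioo ‖ζ - z‖ d, ∀ a < (2 : ℝ),
      g ζ * ‖ζ - z‖ ^ (-a) ≤ B * d' ^ (-a) := by
    intro d' hd' a ha
    have hsub : closedBall z d' ⊆ ball z d := closedBall_subset_ball hd'.2
    exact mul_rpow_norm_sub_le (fun ξ hξ => hg0 ξ (hsub hξ)) (hgc.mono hsub) hgz
      (fun ξ hξ => hlog ξ (hsub (ball_subset_closedBall hξ)))
      (fun ξ hξ => hB ξ (hsub (sphere_subset_closedBall hξ))) (hpos.trans hd'.1) ha
      (by rw [mem_closedBall, dist_eq_norm]; exact hd'.1.le)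
  have hexact : ∀ a < (2 : ℝ), g ζ * ‖ζ - z‖ ^ (-a) ≤ B * d ^ (-a) := fun a ha => by
    have hcont : ContinuousAt (fun d' => B * d' ^ (-a)) d :=
      continuousAt_const.mul (Real.continuousAt_rpow_const d _ (.inl hd.ne'))
    refine ge_of_tendsto (hcont.tendsto.mono_left (nhdsWithin_le_nhds (s := Iio d))) ?_
    exact mem_of_superset (Ioo_mem_nhdsLT hζd) fun d' hd' => hsmaller d' hd' a ha
  have hcont : ∀ t : ℝ, 0 < t → ContinuousAt (fun a : ℝ => t ^ (-a)) 2 := fun t ht =>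
    (Real.continuousAt_const_rpow ht.ne').comp continuousAt_neg
  have hlim : g ζ * ‖ζ - z‖ ^ (-2 : ℝ) ≤ B * d ^ (-2 : ℝ) :=
    le_of_tendsto_of_tendsto
      ((continuousAt_const.mul (hcont _ hpos)).tendsto.mono_left nhdsWithin_le_nhds)
      ((continuousAt_const.mul (hcont _ hd)).tendsto.mono_left nhdsWithin_le_nhds)
      (eventually_nhdsWithin_of_forall (s := Iio 2) hexact)
  rw [Real.rpow_neg hpos.le, Real.rpow_neg hd.le, Real.rpow_two, Real.rpow_two,
    mul_inv_le_iff₀ (by positivity)] at hlim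
  rwa [div_pow, div_eq_inv_mul, ← mul_assoc]

end MaximumPrinciple

section LeviForm

variable {V : Type*} [NormedAddCommGroup V] [NormedSpace ℂ V] {J : V → V →L[ℝ] V} {Φ Ψ : V → ℝ}
  {q y : V}

theorem leviForm_congr (h : Φ =ᶠ[𝓝 y] Ψ) (X : V) : leviForm J Φ y X = leviForm J Ψ y X := by
  have hdc : dcForm J Φ =ᶠ[𝓝 y] dcForm J Ψ :=
    (h.fderiv (𝕜 := ℝ)).mono fun z hz => by rw [dcForm, dcForm, hz]
  rw [leviForm_eq_fderiv_dcForm, leviForm_eq_fderiv_dcForm, hdc.fderiv_eq]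

theorem leviForm_add_const_mul (hJ : ContDiffAt ℝ 1 J y) (hΦ : ContDiffAt ℝ 2 Φ y)
    (hΨ : ContDiffAt ℝ 2 Ψ y) (b : ℝ) (X : V) :
    leviForm J (fun z => Φ z + b * Ψ z) y X = leviForm J Φ y X + b * leviForm J Ψ y X := by
  have hdc : dcForm J (fun z => Φ z + b * Ψ z) =ᶠ[𝓝 y]
      fun z => dcForm J Φ z + b • dcForm J Ψ z := by
    filter_upwards [hΦ.eventually (by simp), hΨ.eventually (by simp)] with z hΦz hΨz
    have hΦz := (hΦz.differentiableAt (by norm_num)).hasFDerivAt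
    have hΨz := (hΨz.differentiableAt (by norm_num)).hasFDerivAt
    ext v
    simp only [dcForm, (hΦz.fun_add (hΨz.const_mul b)).fderiv, neg_apply, add_apply, smul_apply,
      ContinuousLinearMap.comp_apply, smul_eq_mul]
    ring
  have hderiv :=
    ((contDiffAt_dcForm hJ hΦ).differentiableAt (by norm_num)).hasFDerivAt.fun_add
      (((contDiffAt_dcForm hJ hΨ).differentiableAt (by norm_num)).hasFDerivAt.fun_const_smul b)
  simp only [leviForm_eq_fderiv_dcForm, hdc.fderiv_eq, hderiv.fderiv, add_apply, smul_apply,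
    smul_eq_mul]
  ring

/-- The vector `DJ(X) J X - DJ(J X) X`, through which the first derivative of `J` enters the Levi
form: the Levi form of a linear function `ℓ` is `-ℓ (leviTorsion J y X)`. -/
def leviTorsion (J : V → V →L[ℝ] V) (y X : V) : V :=
  fderiv ℝ J y X (J y X) - fderiv ℝ J y (J y X) X

theorem norm_leviTorsion_le (J : V → V →L[ℝ] V) (y X : V) :
    ‖leviTorsion J y X‖ ≤ 2 * ‖fderiv ℝ J y‖ * ‖J y‖ * ‖X‖ ^ 2 := by
  have hJX := (J y).le_opNorm X
  calc ‖leviTorsion J y X‖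
      ≤ ‖fderiv ℝ J y‖ * ‖X‖ * ‖J y X‖ + ‖fderiv ℝ J y‖ * ‖J y X‖ * ‖X‖ :=
        (norm_sub_le _ _).trans
          (add_le_add ((fderiv ℝ J y).le_opNorm₂ _ _) ((fderiv ℝ J y).le_opNorm₂ _ _))
    _ ≤ ‖fderiv ℝ J y‖ * ‖X‖ * (‖J y‖ * ‖X‖) + ‖fderiv ℝ J y‖ * (‖J y‖ * ‖X‖) * ‖X‖ := by gcongr
    _ = 2 * ‖fderiv ℝ J y‖ * ‖J y‖ * ‖X‖ ^ 2 := by ring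

theorem hasFDerivAt_apply_sub_self {G : V →L[ℝ] V →L[ℝ] ℝ} (hG : ∀ x y, G x y = G y x) (q y : V) :
    HasFDerivAt (fun z => G (z - q) (z - q)) ((2 : ℝ) • G (y - q)) y := by
  have hsub := (hasFDerivAt_id (𝕜 := ℝ) y).sub_const q
  refine ((G.hasFDerivAt.comp y hsub).clm_apply hsub).congr_fderiv ?_
  ext v
  simp [hG v, two_mul]

theorem leviForm_comp_quadratic {G : V →L[ℝ] V →L[ℝ] ℝ} (hG : ∀ x y, G x y = G y x)
    (hJ : DifferentiableAt ℝ J y) (hJy : (J y).comp (J y) = -ContinuousLinearMap.id ℝ V)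
    {χ χ' : ℝ → ℝ} {χ'' : ℝ} (hχ : ∀ᶠ t in 𝓝 (G (y - q) (y - q)), HasDerivAt χ (χ' t) t)
    (hχ' : HasDerivAt χ' χ'' (G (y - q) (y - q))) (X : V) :
    leviForm J (fun z => χ (G (z - q) (z - q))) y X =
      2 * χ' (G (y - q) (y - q)) *
          (G X X + G (J y X) (J y X) - G (y - q) (leviTorsion J y X))
        + 4 * χ'' * (G (y - q) X ^ 2 + G (y - q) (J y X) ^ 2) := by
  have hJJ (x : V) : J y (J y x) = -x := DFunLike.congr_fun hJy x
  have hquad := hasFDerivAt_apply_sub_self hG q y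
  have hfderiv : (fun z => (fderiv ℝ (fun z => χ (G (z - q) (z - q))) z).comp (J z)) =ᶠ[𝓝 y]
      fun z => ((2 * χ' (G (z - q) (z - q))) • G (z - q)).comp (J z) := by
    filter_upwards [hquad.continuousAt.eventually hχ] with z hz
    have hcomp : HasFDerivAt (fun z => χ (G (z - q) (z - q))) _ z :=
      hz.comp_hasFDerivAt z (hasFDerivAt_apply_sub_self hG q z)
    rw [hcomp.fderiv, smul_smul, mul_comm]
  have hlin : HasFDerivAt (fun z => G (z - q)) G y :=
    (G.hasFDerivAt.comp y ((hasFDerivAt_id y).sub_const q)).congr_fderiv G.comp_id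
  have hcoeff : HasFDerivAt (fun z => 2 * χ' (G (z - q) (z - q)))
      ((2 : ℝ) • χ'' • (2 : ℝ) • G (y - q)) y := (hχ'.comp_hasFDerivAt y hquad).const_mul 2
  rw [leviForm, hfderiv.fderiv_eq, ((hcoeff.fun_smul hlin).clm_comp hJ.hasFDerivAt).fderiv]
  simp only [map_sub, sub_apply, map_smul, ContinuousLinearMap.comp_add,
    ContinuousLinearMap.comp_smulₛₗ, Real.ringHom_apply, add_apply, smul_apply,
    ContinuousLinearMap.comp_apply, ContinuousLinearMap.compL_apply,
    ContinuousLinearMap.flip_apply, ContinuousLinearMap.smulRight_apply, smul_eq_mul, hJJ, map_neg,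
    leviTorsion]
  ring

end LeviForm

section HermitianForm

variable {V : Type*} [NormedAddCommGroup V] [NormedSpace ℝ V] {J₀ : V →L[ℝ] V}
  {G : V →L[ℝ] V →L[ℝ] ℝ}

/-- `G` is the real part of a Hermitian inner product for the complex structure `J₀`, normalised by
`‖x‖ ^ 2 ≤ G x x`. -/
structure IsHermitianForm (J₀ : V →L[ℝ] V) (G : V →L[ℝ] V →L[ℝ] ℝ) : Prop where
  symm : ∀ x y, G x y = G y x
  norm_sq_le : ∀ x, ‖x‖ ^ 2 ≤ G x x
  map_apply : ∀ x y, G (J₀ x) (J₀ y) = G x y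

theorem IsHermitianForm.apply_self_nonneg (hG : IsHermitianForm J₀ G) (x : V) : 0 ≤ G x x :=
  (sq_nonneg _).trans (hG.norm_sq_le x)

theorem IsHermitianForm.apply_sub_self_pos (hG : IsHermitianForm J₀ G) {q y : V} (hyq : y ≠ q) :
    0 < G (y - q) (y - q) :=
  (pow_pos (norm_pos_iff.2 (sub_ne_zero.2 hyq)) 2).trans_le (hG.norm_sq_le _)

theorem IsHermitianForm.apply_sq_le (hG : IsHermitianForm J₀ G) (x y : V) :
    G x y ^ 2 ≤ G x x * G y y :=
  LinearMap.BilinForm.apply_sq_le_of_symm G.toLinearMap₁₂ hG.apply_self_nonneg ⟨hG.symm⟩ x y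

theorem IsHermitianForm.abs_apply_le (hG : IsHermitianForm J₀ G) {x y : V} {a b : ℝ} (ha : 0 ≤ a)
    (hb : 0 ≤ b) (hx : G x x ≤ a ^ 2) (hy : G y y ≤ b ^ 2) : |G x y| ≤ a * b := by
  refine abs_le_of_sq_le_sq ((hG.apply_sq_le x y).trans ?_) (by positivity)
  calc G x x * G y y ≤ a ^ 2 * b ^ 2 := mul_le_mul hx hy (hG.apply_self_nonneg y) (sq_nonneg a)
    _ = (a * b) ^ 2 := (mul_pow a b 2).symm

theorem IsHermitianForm.sq_add_sq_apply_le (hG : IsHermitianForm J₀ G) (hJ₀ : ∀ x, J₀ (J₀ x) = -x)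
    (y X : V) : G y X ^ 2 + G y (J₀ X) ^ 2 ≤ G y y * G X X := by
  have horth : G X (J₀ X) = 0 := by
    have h := hG.map_apply X (J₀ X)
    rw [hJ₀, map_neg, hG.symm] at h
    linarith
  set Q := G y X ^ 2 + G y (J₀ X) ^ 2
  -- Cauchy–Schwarz against the projection of `y` to the complex line spanned by `X`
  have hCS : Q * Q ≤ Q * (G y y * G X X) := by
    have h := hG.apply_sq_le y (G y X • X + G y (J₀ X) • J₀ X)
    simp only [map_add, map_smul, add_apply, smul_apply, smul_eq_mul, hG.symm (J₀ X) X, horth,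
      hG.map_apply] at h
    linarith
  rcases (by positivity : 0 ≤ Q).eq_or_lt with hQ0 | hQ0
  · rw [← hQ0]
    exact mul_nonneg (hG.apply_self_nonneg y) (hG.apply_self_nonneg X)
  · exact le_of_mul_le_mul_left hCS hQ0

theorem IsHermitianForm.sq_add_sq_apply_add_le (hG : IsHermitianForm J₀ G)
    (hJ₀ : ∀ x, J₀ (J₀ x) = -x) {y X e : V} {s σ : ℝ} (hσ : 0 ≤ σ) (hy : G y y = s ^ 2)
    (he : G e e ≤ σ ^ 2 * G X X) :
    G y X ^ 2 + G y (J₀ X + e) ^ 2 ≤ (1 + σ) ^ 2 * (s ^ 2 * G X X) := by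
  set N := s ^ 2 * G X X
  have hX := hG.apply_self_nonneg X
  have hmain : G y X ^ 2 + G y (J₀ X) ^ 2 ≤ N := by
    simpa only [hy] using hG.sq_add_sq_apply_le hJ₀ y X
  have herr : G y e ^ 2 ≤ σ ^ 2 * N := by
    calc G y e ^ 2 ≤ s ^ 2 * G e e := by simpa only [hy] using hG.apply_sq_le y e
      _ ≤ s ^ 2 * (σ ^ 2 * G X X) := by gcongr
      _ = σ ^ 2 * N := by ring
  have hcross : G y (J₀ X) * G y e ≤ σ * N := by
    refine (abs_le_of_sq_le_sq' ?_ (by positivity)).2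
    calc (G y (J₀ X) * G y e) ^ 2 = G y (J₀ X) ^ 2 * G y e ^ 2 := mul_pow _ _ 2
      _ ≤ N * (σ ^ 2 * N) := by
        gcongr
        linarith [sq_nonneg (G y X)]
      _ = (σ * N) ^ 2 := by ring
  rw [map_add]
  linarith

theorem IsHermitianForm.le_apply_add_self (hG : IsHermitianForm J₀ G) {X e : V} {σ : ℝ}
    (hσ : 0 ≤ σ) (he : G e e ≤ σ ^ 2 * G X X) :
    (1 - 2 * σ) * G X X ≤ G (J₀ X + e) (J₀ X + e) := by
  have hX := hG.apply_self_nonneg X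
  have hsq : G X X = √(G X X) ^ 2 := (Real.sq_sqrt hX).symm
  have hcross : |G (J₀ X) e| ≤ √(G X X) * (σ * √(G X X)) :=
    hG.abs_apply_le (by positivity) (by positivity) ((hG.map_apply X X).trans hsq).le
      (by rwa [mul_pow, ← hsq])
  have hexp : G (J₀ X + e) (J₀ X + e) = G X X + 2 * G (J₀ X) e + G e e := by
    simp only [map_add, add_apply, hG.map_apply, hG.symm e (J₀ X)]
    ring
  rw [mul_left_comm, ← sq, ← hsq] at hcross
  linarith [(abs_le.1 hcross).1, hG.apply_self_nonneg e]

theorem exists_symm_norm_sq_le (V : Type*) [NormedAddCommGroup V] [NormedSpace ℝ V]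
    [FiniteDimensional ℝ V] :
    ∃ G : V →L[ℝ] V →L[ℝ] ℝ, (∀ x y, G x y = G y x) ∧ ∀ x, ‖x‖ ^ 2 ≤ G x x := by
  let e : V ≃L[ℝ] EuclideanSpace ℝ (Fin (Module.finrank ℝ V)) := toEuclidean
  let a := ‖(e.symm : EuclideanSpace ℝ (Fin (Module.finrank ℝ V)) →L[ℝ] V)‖
  refine ⟨a ^ 2 • (innerSL ℝ).bilinearComp e.toContinuousLinearMap e.toContinuousLinearMap,
    fun x y => ?_, fun x => ?_⟩
  · simp [real_inner_comm]
  · calc ‖x‖ ^ 2 ≤ (a * ‖e x‖) ^ 2 := by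
          gcongr
          simpa using e.symm.toContinuousLinearMap.le_opNorm (e x)
      _ = _ := by simp [mul_pow]

theorem isHermitianForm_add_bilinearComp (hsymm : ∀ x y, G x y = G y x)
    (hpos : ∀ x, ‖x‖ ^ 2 ≤ G x x) (hJ₀ : ∀ x, J₀ (J₀ x) = -x) :
    IsHermitianForm J₀ (G + G.bilinearComp J₀ J₀) where
  symm x y := by simp [hsymm x, hsymm (J₀ x)]
  norm_sq_le x := by
    simpa using (hpos x).trans (le_add_of_nonneg_right ((sq_nonneg _).trans (hpos (J₀ x))))
  map_apply x y := by simp [hJ₀, add_comm]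

theorem add_bilinearComp_apply_self_le (G : V →L[ℝ] V →L[ℝ] ℝ) (J₀ : V →L[ℝ] V) (x : V) :
    (G + G.bilinearComp J₀ J₀) x x ≤ ‖G‖ * (1 + ‖J₀‖ ^ 2) * ‖x‖ ^ 2 := by
  have hG (x : V) : G x x ≤ ‖G‖ * ‖x‖ ^ 2 := by
    simpa only [sq, mul_assoc] using (le_abs_self _).trans (G.le_opNorm₂ x x)
  calc G x x + G (J₀ x) (J₀ x) ≤ ‖G‖ * ‖x‖ ^ 2 + ‖G‖ * (‖J₀‖ * ‖x‖) ^ 2 := by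
        refine add_le_add (hG x) ((hG _).trans ?_)
        gcongr
        exact J₀.le_opNorm x
    _ = ‖G‖ * (1 + ‖J₀‖ ^ 2) * ‖x‖ ^ 2 := by ring

end HermitianForm

section LogPole

variable {V : Type*} [NormedAddCommGroup V] [NormedSpace ℂ V] {J : V → V →L[ℝ] V}
  {J₀ : V →L[ℝ] V} {G : V →L[ℝ] V →L[ℝ] ℝ} {K : Set V} {q y X : V} {A κ s m : ℝ}

/-- A function with a logarithmic pole at `q`. For a suitable constant `A`, the second summand
compensates the variation of `J` near `q`, up to a bounded error in the Levi form. -/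
def logPole (G : V →L[ℝ] V →L[ℝ] ℝ) (q : V) (A : ℝ) (y : V) : ℝ :=
  Real.log (G (y - q) (y - q)) + A * √(G (y - q) (y - q))

/-- `Φ` vanishes quadratically at `q`, with the given constants on `K`, and `log Φ` is a `C²`
plurisubharmonic function with a logarithmic pole at `q`. -/
structure IsLogPole (J : V → V →L[ℝ] V) (K : Set V) (q : V) (c₁ c₂ : ℝ) (Φ : V → ℝ) : Prop where
  continuousOn : ContinuousOn Φ K
  mul_norm_sq_le : ∀ y ∈ K, c₁ * ‖y - q‖ ^ 2 ≤ Φ y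
  le_mul_norm_sq : ∀ y ∈ K, Φ y ≤ c₂ * ‖y - q‖ ^ 2
  isC2PSHOn_log : IsC2PSHOn J (fun y => Real.log (Φ y)) (K \ {q})

theorem contDiffAt_logPole (A : ℝ) (hy : G (y - q) (y - q) ≠ 0) :
    ContDiffAt ℝ 2 (logPole G q A) y := by
  have hquad : ContDiffAt ℝ 2 (fun y => G (y - q) (y - q)) y := by fun_prop
  exact (hquad.log hy).add (contDiffAt_const.mul (hquad.sqrt hy))

theorem hasDerivAt_log_add_const_mul_sqrt {t : ℝ} (ht : t ≠ 0) (A : ℝ) :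
    HasDerivAt (fun t => Real.log t + A * √t) (1 / t + A / (2 * √t)) t := by
  simpa [div_eq_mul_inv] using
    (Real.hasDerivAt_log ht).fun_add ((Real.hasDerivAt_sqrt ht).const_mul A)

theorem hasDerivAt_one_div_add_div_sqrt (hs : 0 < s) (A : ℝ) :
    HasDerivAt (fun t => 1 / t + A / (2 * √t)) (-(1 / s ^ 4 + A / (4 * s ^ 3))) (s ^ 2) := by
  have hsqrt : √(s ^ 2) = s := Real.sqrt_sq hs.le
  have h := ((hasDerivAt_const (s ^ 2) (1 : ℝ)).fun_div (hasDerivAt_id' _) (by positivity)).fun_add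
    ((hasDerivAt_const (s ^ 2) A).fun_div
      ((Real.hasDerivAt_sqrt (x := s ^ 2) (by positivity)).const_mul 2) (by rw [hsqrt]; positivity))
  refine h.congr_deriv ?_
  rw [hsqrt]
  field_simp
  ring

theorem leviForm_logPole (hG : ∀ x y, G x y = G y x) (hJ : DifferentiableAt ℝ J y)
    (hJy : (J y).comp (J y) = -ContinuousLinearMap.id ℝ V) (hs : 0 < s)
    (hys : G (y - q) (y - q) = s ^ 2) (A : ℝ) (X : V) :
    leviForm J (logPole G q A) y X =
      (2 / s ^ 2 + A / s) * (G X X + G (J y X) (J y X) - G (y - q) (leviTorsion J y X))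
        - (4 / s ^ 4 + A / s ^ 3) * (G (y - q) X ^ 2 + G (y - q) (J y X) ^ 2) := by
  have hs2 : s ^ 2 ≠ 0 := by positivity
  have h := leviForm_comp_quadratic (q := q) (χ := fun t => Real.log t + A * √t) hG hJ hJy
    (by rw [hys]; exact (eventually_ne_nhds hs2).mono fun t ht =>
      hasDerivAt_log_add_const_mul_sqrt ht A)
    (by rw [hys]; exact hasDerivAt_one_div_add_div_sqrt hs A) X
  refine h.trans ?_
  rw [hys, Real.sqrt_sq hs.le]
  field_simp
  ring

theorem IsHermitianForm.le_leviForm_logPole (hG : IsHermitianForm J₀ G)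
    (hJ₀ : ∀ x, J₀ (J₀ x) = -x) (hJ : DifferentiableAt ℝ J y)
    (hJy : (J y).comp (J y) = -ContinuousLinearMap.id ℝ V) (hs : 0 < s)
    (hys : G (y - q) (y - q) = s ^ 2) (hκ : 0 ≤ κ)
    (he : G (J y X - J₀ X) (J y X - J₀ X) ≤ (κ * s) ^ 2 * G X X)
    (hW : G (leviTorsion J y X) (leviTorsion J y X) ≤ (κ * G X X) ^ 2) :
    -((74 * κ ^ 2 + 14 * κ ^ 3 * s) * G X X) ≤ leviForm J (logPole G q (14 * κ)) y X := by
  have hκs : 0 ≤ κ * s := by positivity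
  have hX := hG.apply_self_nonneg X
  have hJX : J₀ X + (J y X - J₀ X) = J y X := add_sub_cancel _ _
  have hpos : (2 - 3 * (κ * s)) * G X X
      ≤ G X X + G (J y X) (J y X) - G (y - q) (leviTorsion J y X) := by
    have hJJ := hG.le_apply_add_self hκs he
    rw [hJX] at hJJ
    linarith [(abs_le.1 (hG.abs_apply_le hs.le (mul_nonneg hκ hX) hys.le hW)).2]
  have hneg : G (y - q) X ^ 2 + G (y - q) (J y X) ^ 2 ≤ (1 + κ * s) ^ 2 * (s ^ 2 * G X X) := by
    simpa only [hJX] using hG.sq_add_sq_apply_add_le hJ₀ hκs hys he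
  calc -((74 * κ ^ 2 + 14 * κ ^ 3 * s) * G X X)
      = (2 / s ^ 2 + 14 * κ / s) * ((2 - 3 * (κ * s)) * G X X)
        - (4 / s ^ 4 + 14 * κ / s ^ 3) * ((1 + κ * s) ^ 2 * (s ^ 2 * G X X)) := by
        field_simp
        ring
    _ ≤ _ := by
        rw [leviForm_logPole hG.symm hJ hJy hs hys]
        gcongr

theorem IsHermitianForm.neg_mul_norm_sq_le_leviForm_logPole {C S : ℝ}
    (hG : IsHermitianForm (J q) G) (hm : ∀ x, G x x ≤ m * ‖x‖ ^ 2) (hm0 : 0 ≤ m)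
    (hJq : ∀ x, J q (J q x) = -x) (hJ : DifferentiableAt ℝ J y)
    (hJy : (J y).comp (J y) = -ContinuousLinearMap.id ℝ V) (hyq : y ≠ q) (hC : 1 ≤ C)
    (hJC : ‖J y‖ ≤ C) (hDJ : ‖fderiv ℝ J y‖ ≤ C) (hlip : ‖J y - J q‖ ≤ C * ‖y - q‖)
    (hS : √(G (y - q) (y - q)) ≤ S) (hκ : κ = 2 * C ^ 2 * (1 + m)) (X : V) :
    -((74 * κ ^ 2 + 14 * κ ^ 3 * S) * m * ‖X‖ ^ 2) ≤ leviForm J (logPole G q (14 * κ)) y X := by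
  have hpos := hG.apply_sub_self_pos hyq
  set s := √(G (y - q) (y - q))
  have hs : 0 < s := Real.sqrt_pos.2 hpos
  have hys : G (y - q) (y - q) = s ^ 2 := (Real.sq_sqrt hpos.le).symm
  have hS0 : 0 ≤ S := hs.le.trans hS
  have hκ0 : 0 ≤ κ := hκ ▸ by positivity
  have hle : m ≤ (1 + m) ^ 2 := by nlinarith
  have he : G (J y X - J q X) (J y X - J q X) ≤ (κ * s) ^ 2 * G X X := by
    have hnorm : ‖y - q‖ ^ 2 ≤ s ^ 2 := hys ▸ hG.norm_sq_le _
    calc G (J y X - J q X) (J y X - J q X)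
        ≤ m * (C * ‖y - q‖ * ‖X‖) ^ 2 := (hm _).trans (by
          gcongr
          exact (J y - J q).le_of_opNorm_le hlip X)
      _ = C ^ 2 * m * (‖y - q‖ ^ 2 * ‖X‖ ^ 2) := by ring
      _ ≤ 4 * (C ^ 2) ^ 2 * (1 + m) ^ 2 * (s ^ 2 * G X X) := by
          gcongr
          · nlinarith [one_le_pow₀ (n := 2) hC]
          · exact hG.norm_sq_le X
      _ = (κ * s) ^ 2 * G X X := by rw [hκ]; ring
  have hW : G (leviTorsion J y X) (leviTorsion J y X) ≤ (κ * G X X) ^ 2 := by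
    calc G (leviTorsion J y X) (leviTorsion J y X)
        ≤ m * (2 * C * C * ‖X‖ ^ 2) ^ 2 := (hm _).trans (by
          gcongr
          exact (norm_leviTorsion_le J y X).trans (by gcongr))
      _ = m * (4 * C ^ 4 * (‖X‖ ^ 2) ^ 2) := by ring
      _ ≤ (1 + m) ^ 2 * (4 * C ^ 4 * G X X ^ 2) := by
          gcongr
          exact hG.norm_sq_le X
      _ = (κ * G X X) ^ 2 := by rw [hκ]; ring
  calc -((74 * κ ^ 2 + 14 * κ ^ 3 * S) * m * ‖X‖ ^ 2)
      ≤ -((74 * κ ^ 2 + 14 * κ ^ 3 * s) * G X X) := by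
        rw [neg_le_neg_iff, mul_assoc _ m]
        gcongr
        · exact hG.apply_self_nonneg X
        · exact hm X
    _ ≤ _ := hG.le_leviForm_logPole hJq hJ hJy hs hys hκ0 he hW

end LogPole

section UniformBounds

variable {V : Type*} [NormedAddCommGroup V] [NormedSpace ℂ V] {Ω K : Set V} {J : V → V →L[ℝ] V}
  {r Ψ : V → ℝ}

theorem continuousOn_leviForm (hΩ : IsOpen Ω) (hJ : IsACS Ω J) (hΨ : ContDiffOn ℝ 2 Ψ Ω) :
    ContinuousOn (fun z : V × V => leviForm J Ψ z.1 z.2) (Ω ×ˢ univ) := by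
  have hfst : MapsTo (Prod.fst : V × V → V) (Ω ×ˢ univ) Ω := fun z hz => hz.1
  have hdc : ContDiffOn ℝ 1 (dcForm J Ψ) Ω := fun y hy =>
    (contDiffAt_dcForm ((hJ.smooth.contDiffAt (hΩ.mem_nhds hy)).of_le (by exact_mod_cast le_top))
      (hΨ.contDiffAt (hΩ.mem_nhds hy))).contDiffWithinAt
  have hD := (hdc.continuousOn_fderiv_of_isOpen hΩ le_rfl).comp continuousOn_fst hfst
  have hJX := (hJ.smooth.continuousOn.comp continuousOn_fst hfst).clm_apply continuousOn_snd
  simp only [leviForm_eq_fderiv_dcForm]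
  exact ((hD.clm_apply continuousOn_snd).clm_apply hJX).sub
    ((hD.clm_apply hJX).clm_apply continuousOn_snd)

theorem leviForm_smul (t : ℝ) (y X : V) : leviForm J Ψ y (t • X) = t ^ 2 * leviForm J Ψ y X := by
  simp only [leviForm, map_smul, smul_apply, smul_eq_mul]
  ring

theorem leviForm_eq_norm_sq_mul (J : V → V →L[ℝ] V) (Ψ : V → ℝ) (y : V) {X : V} (hX : X ≠ 0) :
    leviForm J Ψ y X = leviForm J Ψ y (‖X‖⁻¹ • X) * ‖X‖ ^ 2 := by
  rw [leviForm_smul, inv_pow, mul_comm, mul_inv_cancel_left₀ (by positivity)]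

theorem inv_norm_smul_mem_sphere {X : V} (hX : X ≠ 0) : ‖X‖⁻¹ • X ∈ sphere (0 : V) 1 := by
  simp [norm_smul, hX]

theorem exists_pos_mul_norm_sq_le_leviForm [ProperSpace V] (hΩ : IsOpen Ω) (hJ : IsACS Ω J)
    (hΨ : ContDiffOn ℝ 2 Ψ Ω) (hpsh : StrictPSHOn J Ψ Ω) (hK : IsCompact K) (hKΩ : K ⊆ Ω) :
    ∃ lam > 0, ∀ y ∈ K, ∀ X, lam * ‖X‖ ^ 2 ≤ leviForm J Ψ y X := by
  obtain ⟨lam, hlam, hmin⟩ : ∃ lam > 0, ∀ z ∈ K ×ˢ sphere (0 : V) 1, lam ≤ leviForm J Ψ z.1 z.2 :=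
    (hK.prod (isCompact_sphere 0 1)).exists_forall_le'
      ((continuousOn_leviForm hΩ hJ hΨ).mono (prod_mono hKΩ (subset_univ _)))
      fun z hz => hpsh z.1 (hKΩ hz.1) z.2 (ne_of_mem_sphere hz.2 one_ne_zero)
  refine ⟨lam, hlam, fun y hy X => ?_⟩
  rcases eq_or_ne X 0 with rfl | hX
  · simp [leviForm]
  · rw [leviForm_eq_norm_sq_mul J Ψ y hX]
    gcongr
    exact hmin (y, _) ⟨hy, inv_norm_smul_mem_sphere hX⟩

theorem exists_leviForm_le_mul_norm_sq [ProperSpace V] (hΩ : IsOpen Ω) (hJ : IsACS Ω J)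
    (hΨ : ContDiffOn ℝ 2 Ψ Ω) (hK : IsCompact K) (hKΩ : K ⊆ Ω) :
    ∃ M > 0, ∀ y ∈ K, ∀ X, leviForm J Ψ y X ≤ M * ‖X‖ ^ 2 := by
  obtain ⟨M, hM⟩ := (hK.prod (isCompact_sphere (0 : V) 1)).exists_bound_of_continuousOn
    ((continuousOn_leviForm hΩ hJ hΨ).mono (prod_mono hKΩ (subset_univ _)))
  refine ⟨max M 1, by positivity, fun y hy X => ?_⟩
  rcases eq_or_ne X 0 with rfl | hX
  · simp [leviForm]
  · rw [leviForm_eq_norm_sq_mul J Ψ y hX]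
    gcongr
    exact le_max_of_le_left
      ((le_abs_self _).trans (hM (y, _) ⟨hy, inv_norm_smul_mem_sphere hX⟩))

theorem exists_norm_sub_le_of_contDiffOn {W : Type*} [NormedAddCommGroup W] [NormedSpace ℝ W]
    {f : V → W} (hΩ : IsOpen Ω) (hf : ContDiffOn ℝ 1 f Ω) (hK : IsCompact K) (hKΩ : K ⊆ Ω) :
    ∃ C, ∀ x ∈ K, ∀ y ∈ K, ‖f x - f y‖ ≤ C * ‖x - y‖ := by
  have hloc : LocallyLipschitzOn K f := fun x hx => by
    obtain ⟨C, t, ht, hlip⟩ := (hf.contDiffAt (hΩ.mem_nhds (hKΩ hx))).exists_lipschitzOnWith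
    exact ⟨C, t, mem_nhdsWithin_of_mem_nhds ht, hlip⟩
  obtain ⟨C, hC⟩ := hloc.exists_lipschitzOnWith_of_compact hK
  exact ⟨C, fun x hx y hy => by simpa only [dist_eq_norm] using hC.dist_le_mul x hx y hy⟩

theorem IsACS.exists_bound (hΩ : IsOpen Ω) (hJ : IsACS Ω J) (hK : IsCompact K) (hKΩ : K ⊆ Ω) :
    ∃ C, 1 ≤ C ∧ ∀ y ∈ K, ‖J y‖ ≤ C ∧ ‖fderiv ℝ J y‖ ≤ C ∧ ∀ q ∈ K, ‖J y - J q‖ ≤ C * ‖y - q‖ := by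
  have hJ1 : ContDiffOn ℝ 1 J Ω := hJ.smooth.of_le (by exact_mod_cast le_top)
  obtain ⟨C₁, hC₁⟩ := hK.exists_bound_of_continuousOn (hJ1.continuousOn.mono hKΩ)
  obtain ⟨C₂, hC₂⟩ := hK.exists_bound_of_continuousOn
    ((hJ1.continuousOn_fderiv_of_isOpen hΩ le_rfl).mono hKΩ)
  obtain ⟨C₃, hC₃⟩ := exists_norm_sub_le_of_contDiffOn hΩ hJ1 hK hKΩ
  refine ⟨max (max 1 C₁) (max C₂ C₃), by simp, fun y hy => ⟨(hC₁ y hy).trans (by simp),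
    (hC₂ y hy).trans (by simp), fun q hq => (hC₃ y hy q hq).trans ?_⟩⟩
  gcongr
  simp

theorem IsACS.apply_apply (hJ : IsACS Ω J) {y : V} (hy : y ∈ Ω) (x : V) : J y (J y x) = -x :=
  DFunLike.congr_fun (hJ.sq y hy) x

theorem exists_isHermitianForm [FiniteDimensional ℂ V] (hΩ : IsOpen Ω) (hJ : IsACS Ω J)
    (hK : IsCompact K) (hKΩ : K ⊆ Ω) :
    ∃ m, 0 ≤ m ∧ ∀ q ∈ K, ∃ G, IsHermitianForm (J q) G ∧ ∀ x, G x x ≤ m * ‖x‖ ^ 2 := by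
  have := FiniteDimensional.complexToReal V
  obtain ⟨G, hsymm, hpos⟩ := exists_symm_norm_sq_le V
  obtain ⟨C, -, hC⟩ := hJ.exists_bound hΩ hK hKΩ
  refine ⟨‖G‖ * (1 + C ^ 2), by positivity, fun q hq => ⟨_,
    isHermitianForm_add_bilinearComp hsymm hpos (hJ.apply_apply (hKΩ hq)), fun x => ?_⟩⟩
  exact (add_bilinearComp_apply_self_le G (J q) x).trans (by gcongr; exact (hC q hq).1)

theorem exists_neg_le_leviForm_logPole [FiniteDimensional ℂ V] (hΩ : IsOpen Ω) (hJ : IsACS Ω J)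
    (hK : IsCompact K) (hKΩ : K ⊆ Ω) :
    ∃ A N m S : ℝ, 0 ≤ A ∧ 0 ≤ N ∧ 0 ≤ m ∧ ∀ q ∈ K, ∃ G, IsHermitianForm (J q) G ∧
      (∀ x, G x x ≤ m * ‖x‖ ^ 2) ∧ ∀ y ∈ K, √(G (y - q) (y - q)) ≤ S ∧
        (y ≠ q → ∀ X, -(N * ‖X‖ ^ 2) ≤ leviForm J (logPole G q A) y X) := by
  obtain ⟨C, hC1, hC⟩ := hJ.exists_bound hΩ hK hKΩ
  obtain ⟨m, hm0, hm⟩ := exists_isHermitianForm hΩ hJ hK hKΩ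
  obtain ⟨d, hd⟩ := hK.isBounded.exists_norm_le
  set κ := 2 * C ^ 2 * (1 + m) with hκ
  have : 0 ≤ κ := by positivity
  set S := √(m * (|d| + |d|) ^ 2)
  refine ⟨14 * κ, (74 * κ ^ 2 + 14 * κ ^ 3 * S) * m, m, S, by positivity, by positivity, hm0,
    fun q hq => ?_⟩
  obtain ⟨G, hG, hGm⟩ := hm q hq
  refine ⟨G, hG, hGm, fun y hy => ?_⟩
  have hyS : √(G (y - q) (y - q)) ≤ S := by
    refine Real.sqrt_le_sqrt ((hGm _).trans ?_)
    gcongr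
    exact norm_sub_le_of_le ((hd y hy).trans (le_abs_self d)) ((hd q hq).trans (le_abs_self d))
  refine ⟨hyS, fun hyq X => ?_⟩
  obtain ⟨hJC, hDJ, hlip⟩ := hC y hy
  exact hG.neg_mul_norm_sq_le_leviForm_logPole hGm hm0 (hJ.apply_apply (hKΩ hq))
    ((hJ.smooth.contDiffAt (hΩ.mem_nhds (hKΩ hy))).differentiableAt (by simp))
    (hJ.sq y (hKΩ hy)) hyq hC1 hJC hDJ (hlip q hq) hyS hκ X

theorem IsHermitianForm.isLogPole {G : V →L[ℝ] V →L[ℝ] ℝ} {q : V}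
    {J₀ : V →L[ℝ] V} {A B N R S lam m : ℝ} (hΩ : IsOpen Ω) (hJ : IsACS Ω J)
    (hr : ContDiffOn ℝ 2 r Ω) (hKΩ : K ⊆ Ω) (hG : IsHermitianForm J₀ G)
    (hm : ∀ x, G x x ≤ m * ‖x‖ ^ 2) (hm0 : 0 ≤ m) (hA : 0 ≤ A) (hB : 0 ≤ B)
    (hBN : N = B * lam) (hR : ∀ y ∈ K, |r y| ≤ R)
    (hS : ∀ y ∈ K, √(G (y - q) (y - q)) ≤ S)
    (hlam : ∀ y ∈ K, ∀ X, lam * ‖X‖ ^ 2 ≤ leviForm J r y X)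
    (hN : ∀ y ∈ K, y ≠ q → ∀ X, -(N * ‖X‖ ^ 2) ≤ leviForm J (logPole G q A) y X) :
    IsLogPole J K q (Real.exp (-(B * R))) (m * Real.exp (A * S + B * R))
      fun y => G (y - q) (y - q) * Real.exp (A * √(G (y - q) (y - q)) + B * r y) := by
  have hlog {y : V} (hyq : y ≠ q) :
      (fun y => Real.log (G (y - q) (y - q) * Real.exp (A * √(G (y - q) (y - q)) + B * r y)))
        =ᶠ[𝓝 y] fun y => logPole G q A y + B * r y := by
    filter_upwards [isOpen_ne.mem_nhds hyq] with y hy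
    rw [Real.log_mul (hG.apply_sub_self_pos hy).ne' (Real.exp_ne_zero _), Real.log_exp, logPole,
      add_assoc]
  have hpole {y : V} (hyq : y ≠ q) : ContDiffAt ℝ 2 (logPole G q A) y :=
    contDiffAt_logPole A (hG.apply_sub_self_pos hyq).ne'
  refine ⟨?_, fun y hy => ?_, fun y hy => ?_, fun y hy => ?_, fun y hy X => ?_⟩
  · have hrK := hr.continuousOn.mono hKΩ
    fun_prop
  · have hRy := (abs_le.1 (hR y hy)).1
    rw [mul_comm]
    gcongr
    · exact hG.apply_self_nonneg _
    · exact hG.norm_sq_le _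
    · nlinarith [mul_nonneg hA (Real.sqrt_nonneg (G (y - q) (y - q)))]
  · rw [mul_right_comm]
    gcongr
    · exact hm _
    · exact hS y hy
    · exact (abs_le.1 (hR y hy)).2
  · exact ((hpole hy.2).add (contDiffAt_const.mul
      (hr.contDiffAt (hΩ.mem_nhds (hKΩ hy.1))))).congr_of_eventuallyEq (hlog hy.2)
  · have hyΩ := hΩ.mem_nhds (hKΩ hy.1)
    rw [leviForm_congr (hlog hy.2), leviForm_add_const_mul
      ((hJ.smooth.contDiffAt hyΩ).of_le (by exact_mod_cast le_top)) (hpole hy.2)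
      (hr.contDiffAt hyΩ)]
    have hBlevi := mul_le_mul_of_nonneg_left (hlam y hy.1 X) hB
    rw [← mul_assoc, ← hBN] at hBlevi
    linarith [hN y hy.1 hy.2 X]

theorem exists_isLogPole [FiniteDimensional ℂ V] (hΩ : IsOpen Ω) (hJ : IsACS Ω J)
    (hr : ContDiffOn ℝ 2 r Ω) (hpsh : StrictPSHOn J r Ω) (hK : IsCompact K) (hKΩ : K ⊆ Ω) :
    ∃ c₁ > 0, ∃ c₂ ≥ 0, ∀ q ∈ K, ∃ Φ, IsLogPole J K q c₁ c₂ Φ := by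
  have := FiniteDimensional.proper ℂ V
  obtain ⟨lam, hlam, hlevi⟩ := exists_pos_mul_norm_sq_le_leviForm hΩ hJ hr hpsh hK hKΩ
  obtain ⟨R, hR⟩ := hK.exists_bound_of_continuousOn (hr.continuousOn.mono hKΩ)
  obtain ⟨A, N, m, S, hA, hN, hm, hpole⟩ := exists_neg_le_leviForm_logPole hΩ hJ hK hKΩ
  refine ⟨Real.exp (-(N / lam * R)), Real.exp_pos _, m * Real.exp (A * S + N / lam * R),
    by positivity, fun q hq => ?_⟩
  obtain ⟨G, hG, hGm, hG'⟩ := hpole q hq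
  exact ⟨_, hG.isLogPole hΩ hJ hr hKΩ hGm hm hA (by positivity) (div_mul_cancel₀ N hlam.ne').symm
    hR (fun y hy => (hG' y hy).1) hlevi fun y hy => (hG' y hy).2⟩

end UniformBounds

section SchwarzLemma

variable {V : Type*} [NormedAddCommGroup V] [NormedSpace ℂ V] {Ω K : Set V} {U : Set ℂ}
  {J : V → V →L[ℝ] V} {h : ℂ → V} {Φ Ψ r : V → ℝ} {q : V} {z ζ : ℂ} {c₁ c₂ d M : ℝ}

theorem isSubMeanAt_comp [CompleteSpace V] (hΩ : IsOpen Ω) (hJ : IsACS Ω J) (hU : IsOpen U)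
    (hh : IsLocLipschitzCurveOn J h U) (hmaps : MapsTo h U Ω) (hΨ : IsC2PSHOn J Ψ (h '' U))
    (hζ : ζ ∈ U) : IsSubMeanAt (fun ξ => Ψ (h ξ)) ζ := by
  obtain ⟨R, hR, hRU⟩ := Metric.isOpen_iff.1 hU ζ hζ
  filter_upwards [Ioo_mem_nhdsGT hR] with ρ hρ
  refine ⟨fun ξ hξ => ?_, ?_⟩
  · have hξU : ξ ∈ U := hRU (closedBall_subset_ball hρ.2 hξ)
    exact ((hΨ.contDiffAt _ (mem_image_of_mem h hξU)).continuousAt.comp (f := h)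
      (hh.holomorphic ξ hξU).1.continuousAt).continuousWithinAt
  · exact le_circleAverage_comp hΩ hJ (hh.mono hRU) (hmaps.mono_left hRU)
      (hΨ.mono (image_mono hRU)) ⟨hρ.1.le, hρ.2⟩

theorem IsLogPole.isSubMeanAt_log_comp [CompleteSpace V] (hΦ : IsLogPole J K q c₁ c₂ Φ)
    (hΩ : IsOpen Ω) (hJ : IsACS Ω J) (hKΩ : K ⊆ Ω) (hh : IsLocLipschitzCurveOn J h U)
    (hU : IsOpen U) (hmaps : MapsTo h U K) (hζ : ζ ∈ U) (hζq : h ζ ≠ q) :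
    IsSubMeanAt (fun ξ => Real.log (Φ (h ξ))) ζ := by
  have hhc : ContinuousOn h U := fun ξ hξ =>
    (hh.holomorphic ξ hξ).1.continuousAt.continuousWithinAt
  refine isSubMeanAt_comp (Ψ := fun y => Real.log (Φ y)) hΩ hJ
    (hhc.isOpen_inter_preimage hU isOpen_compl_singleton) (hh.mono inter_subset_left)
    (fun ξ hξ => hKΩ (hmaps hξ.1)) (hΦ.isC2PSHOn_log.mono ?_) ⟨hζ, hζq⟩
  rintro _ ⟨ξ, hξ, rfl⟩
  exact ⟨hmaps hξ.1, hξ.2⟩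

theorem IsLogPole.norm_sub_le [CompleteSpace V] (hΦ : IsLogPole J K (h z) c₁ c₂ Φ)
    (hc₁ : 0 < c₁) (hc₂ : 0 ≤ c₂) (hΩ : IsOpen Ω) (hJ : IsACS Ω J) (hKΩ : K ⊆ Ω)
    (hh : IsLocLipschitzCurveOn J h (ball z d)) (hmaps : MapsTo h (ball z d) K)
    (hM : ∀ ζ ∈ ball z d, ‖h ζ - h z‖ ≤ M) (hζ : ζ ∈ ball z d) :
    ‖h ζ - h z‖ ≤ √(c₂ / c₁) * M * ‖ζ - z‖ / d := by
  have hd : 0 < d := dist_nonneg.trans_lt hζ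
  have hM0 : 0 ≤ M := (norm_nonneg _).trans (hM ζ hζ)
  have hhd : ∀ ξ ∈ ball z d, DifferentiableAt ℝ h ξ := fun ξ hξ => (hh.holomorphic ξ hξ).1
  have hlower : ∀ ξ ∈ ball z d, c₁ * ‖h ξ - h z‖ ^ 2 ≤ Φ (h ξ) := fun ξ hξ =>
    hΦ.mul_norm_sq_le _ (hmaps hξ)
  have hupper : ∀ ξ ∈ ball z d, Φ (h ξ) ≤ c₂ * ‖h ξ - h z‖ ^ 2 := fun ξ hξ =>
    hΦ.le_mul_norm_sq _ (hmaps hξ)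
  have hnonneg : ∀ ξ ∈ ball z d, 0 ≤ Φ (h ξ) := fun ξ hξ =>
    le_trans (by positivity) (hlower ξ hξ)
  have hvanish : (fun ξ => Φ (h ξ)) =O[𝓝 z] fun ξ => ‖ξ - z‖ ^ 2 := by
    have hΦh : (fun ξ => Φ (h ξ)) =O[𝓝 z] fun ξ => ‖h ξ - h z‖ ^ 2 := by
      refine .of_bound c₂ ?_
      filter_upwards [ball_mem_nhds z hd] with ξ hξ
      simpa [abs_of_nonneg (hnonneg ξ hξ)] using hupper ξ hξ
    exact hΦh.trans ((hhd z (mem_ball_self hd)).isBigO_sub.norm_norm.pow 2)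
  have hlog : ∀ ξ ∈ ball z d, Φ (h ξ) ≠ 0 → IsSubMeanAt (fun ξ => Real.log (Φ (h ξ))) ξ := by
    refine fun ξ hξ hξ0 => hΦ.isSubMeanAt_log_comp hΩ hJ hKΩ hh isOpen_ball hmaps hξ fun hξz => ?_
    exact hξ0 (le_antisymm (by simpa [hξz] using hupper ξ hξ) (hnonneg ξ hξ))
  have hsq : c₁ * ‖h ζ - h z‖ ^ 2 ≤ c₂ * M ^ 2 * (‖ζ - z‖ / d) ^ 2 := by
    refine (hlower ζ hζ).trans (le_mul_div_sq_of_isSubMeanAt_log hnonneg (hΦ.continuousOn.comp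
      (fun ξ hξ => (hhd ξ hξ).continuousAt.continuousWithinAt) hmaps) hvanish hlog ?_ hζ)
    exact fun ξ hξ => (hupper ξ hξ).trans (by gcongr; exact hM ξ hξ)
  refine le_of_sq_le_sq ?_ (by positivity)
  rw [mul_div_assoc, mul_pow, mul_pow, Real.sq_sqrt (by positivity), div_mul_eq_mul_div,
    div_mul_eq_mul_div, le_div_iff₀ hc₁]
  linarith

theorem exists_norm_sub_le_of_isLocLipschitzCurveOn [FiniteDimensional ℂ V] (hΩ : IsOpen Ω)
    (hJ : IsACS Ω J) (hr : ContDiffOn ℝ 2 r Ω) (hpsh : StrictPSHOn J r Ω) (hK : IsCompact K)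
    (hKΩ : K ⊆ Ω) :
    ∃ C ≥ 0, ∀ (h : ℂ → V) (z : ℂ) (d M : ℝ), IsLocLipschitzCurveOn J h (ball z d) →
      MapsTo h (ball z d) K → (∀ ζ ∈ ball z d, ‖h ζ - h z‖ ≤ M) →
      ∀ ζ ∈ ball z d, ‖h ζ - h z‖ ≤ C * M * ‖ζ - z‖ / d := by
  have : CompleteSpace V := FiniteDimensional.complete ℂ V
  obtain ⟨c₁, hc₁, c₂, hc₂, hpole⟩ := exists_isLogPole hΩ hJ hr hpsh hK hKΩ
  refine ⟨√(c₂ / c₁), Real.sqrt_nonneg _, fun h z d M hh hmaps hM ζ hζ => ?_⟩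
  obtain ⟨Φ, hΦ⟩ := hpole (h z) (hmaps (mem_ball_self (dist_nonneg.trans_lt hζ)))
  exact hΦ.norm_sub_le hc₁ hc₂ hΩ hJ hKΩ hh hmaps hM hζ

end SchwarzLemma

section LocallyBoundedDerivative

variable {X Y : Type*} [NormedAddCommGroup X] [NormedAddCommGroup Y] {h : X → Y} {U : Set X}
  {q y z ζ : X} {C L σ : ℝ}

theorem norm_sub_le_three_mul_dist (hL : 0 ≤ L)
    (hq : ∀ y ∈ ball q σ, ‖h y - h q‖ ≤ L * ‖y - q‖) (hy : 2 * dist y q ≤ σ)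
    (hζ : ζ ∈ ball y (dist y q)) : ‖h ζ - h y‖ ≤ 3 * L * dist y q := by
  rw [mem_ball] at hζ
  have hζq : dist ζ q < 2 * dist y q := by linarith [dist_triangle ζ y q]
  have hhζ : ‖h ζ - h q‖ ≤ L * (2 * dist y q) := by
    refine (hq ζ (hζq.trans_le hy)).trans ?_
    rw [← dist_eq_norm ζ]
    gcongr
  have hhy : ‖h y - h q‖ ≤ L * dist y q := by
    rw [dist_eq_norm]
    exact hq y (mem_ball.2 (by linarith [dist_nonneg (x := ζ) (y := y)]))
  linarith [norm_sub_le_norm_sub_add_norm_sub (h ζ) (h q) (h y), norm_sub_rev (h q) (h y)]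

variable [NormedSpace ℝ X] [NormedSpace ℝ Y]

theorem isOpen_setOf_isBoundedUnder_nhds {T : Type*} [TopologicalSpace T] (u : T → ℝ) :
    IsOpen {x | (𝓝 x).IsBoundedUnder (· ≤ ·) u} :=
  isOpen_iff_eventually.2 fun _ ⟨b, hb⟩ =>
    (eventually_eventually_nhds.2 (eventually_map.1 hb)).mono fun _ hξ => ⟨b, eventually_map.2 hξ⟩

/- Baire's theorem, applied to the closed sets on which the difference quotients of `h` are bounded
by `n` at scale `1 / (n + 1)`. -/
theorem exists_forall_norm_sub_le_mul [LocallyCompactSpace X] {P : Set X} (hP : IsLocallyClosed P)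
    (hne : P.Nonempty) (hh : ∀ x ∈ P, DifferentiableAt ℝ h x) :
    ∃ x ∈ P, ∃ σ > 0, ∃ L ≥ 0, ∀ q ∈ P ∩ ball x σ, ∀ y ∈ ball q σ,
      ‖h y - h q‖ ≤ L * ‖y - q‖ := by
  have : LocallyCompactSpace P := hP.locallyCompactSpace
  have : Nonempty P := hne.to_subtype
  set S : ℕ → Set P := fun n =>
    {x | ∀ y : X, dist y x < 1 / (n + 1) → ‖h y - h x‖ ≤ n * ‖y - x‖} with hS
  have hhP : Continuous fun x : P => h x := continuous_iff_continuousAt.2 fun x =>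
    (hh x x.2).continuousAt.comp continuousAt_subtype_val
  have hclosed : ∀ n, IsClosed (S n) := fun n => by
    simp only [hS, ofPred_forall]
    exact isClosed_iInter fun y => isClosed_imp (isOpen_lt (by fun_prop) continuous_const)
      (isClosed_le (continuous_const.sub hhP).norm (by fun_prop))
  have hcover : ⋃ n, S n = univ := by
    refine eq_univ_of_forall fun x => mem_iUnion.2 ?_
    obtain ⟨c, hc⟩ := (hh x x.2).isBigO_sub.bound
    obtain ⟨δ, hδ, hball⟩ := Metric.eventually_nhds_iff_ball.1 hc
    obtain ⟨n, hn⟩ := exists_nat_gt (max c δ⁻¹)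
    obtain ⟨hcn, hδn⟩ := max_lt_iff.1 hn
    refine ⟨n, fun y hy => (hball y (hy.trans ?_)).trans (by gcongr)⟩
    rw [one_div]
    exact inv_lt_of_inv_lt₀ hδ (hδn.trans (by linarith))
  obtain ⟨n, x, hx⟩ := nonempty_interior_of_iUnion_of_closed hclosed hcover
  obtain ⟨σ, hσ, hSσ⟩ := Metric.isOpen_iff.1 isOpen_interior x hx
  refine ⟨x, x.2, min σ (1 / (n + 1)), by positivity, n, n.cast_nonneg, fun q hq y hy => ?_⟩
  have hqS : (⟨q, hq.1⟩ : P) ∈ S n :=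
    interior_subset (hSσ (ball_subset_ball (min_le_left _ _) hq.2))
  exact hqS y (ball_subset_ball (min_le_right _ _) hy)

theorem isBoundedUnder_norm_fderiv_of_forall_ball [ProperSpace X] (hU : IsOpen U)
    (hh : ∀ x ∈ U, DifferentiableAt ℝ h x) (hC : 0 ≤ C)
    (hgrad : ∀ z d M, 0 < d → ball z d ⊆ U →
      (∀ x ∈ ball z d, (𝓝 x).IsBoundedUnder (· ≤ ·) fun ξ => ‖fderiv ℝ h ξ‖) →
      (∀ x ∈ ball z d, ‖h x - h z‖ ≤ M) → ‖fderiv ℝ h z‖ ≤ C * M / d) (hz : z ∈ U) :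
    (𝓝 z).IsBoundedUnder (· ≤ ·) fun ξ => ‖fderiv ℝ h ξ‖ := by
  set B : Set X := {x | (𝓝 x).IsBoundedUnder (· ≤ ·) fun ξ => ‖fderiv ℝ h ξ‖}
  have hB : IsClosed Bᶜ := (isOpen_setOf_isBoundedUnder_nhds _).isClosed_compl
  by_contra hzB
  obtain ⟨x, ⟨hxU, hxB⟩, σ, hσ, L, hL, hlip⟩ := exists_forall_norm_sub_le_mul
    (hU.isLocallyClosed.inter hB.isLocallyClosed) ⟨z, hz, hzB⟩ fun x hx => hh x hx.1
  obtain ⟨τ, hτ, hτU⟩ := Metric.isOpen_iff.1 hU x hxU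
  refine hxB ⟨L + 3 * C * L, eventually_map.2 ?_⟩
  filter_upwards [ball_mem_nhds x (show 0 < min σ τ / 4 by positivity)] with y hy
  rw [mem_ball, lt_div_iff₀ four_pos, lt_min_iff] at hy
  by_cases hyB : y ∈ Bᶜ
  · have hyU : y ∈ U := hτU (mem_ball.2 (by linarith))
    have hle : ‖fderiv ℝ h y‖ ≤ L := (hh y hyU).hasFDerivAt.le_of_lip' hL <| by
      filter_upwards [ball_mem_nhds y hσ] using
        hlip y ⟨⟨hyU, hyB⟩, mem_ball.2 (by linarith)⟩
    nlinarith [mul_nonneg hC hL, dist_nonneg (x := y) (y := x)]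
  obtain ⟨q, hqB, hq⟩ := hB.exists_infDist_eq_dist ⟨x, hxB⟩ y
  have hδ : 0 < dist y q := hq ▸ (hB.notMem_iff_infDist_pos ⟨x, hxB⟩).1 hyB
  have hqy : dist y q ≤ dist y x := hq ▸ infDist_le_dist_of_mem hxB
  have hqx : dist q x ≤ 2 * dist y x := by linarith [dist_triangle_left q x y]
  have hballU : ball y (dist y q) ⊆ U :=
    (ball_subset_ball' (by linarith : dist y q + dist y x ≤ τ)).trans hτU
  have hballB : ball y (dist y q) ⊆ B := fun ζ hζ => by
    by_contra hζB
    exact (mem_ball'.1 hζ).not_ge (hq ▸ infDist_le_dist_of_mem hζB)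
  have hosc : ∀ ζ ∈ ball y (dist y q), ‖h ζ - h y‖ ≤ 3 * L * dist y q := fun ζ hζ =>
    norm_sub_le_three_mul_dist hL (hlip q ⟨⟨hτU (mem_ball.2 (by linarith)), hqB⟩,
      mem_ball.2 (by linarith)⟩) (by linarith) hζ
  have hle := hgrad y _ _ hδ hballU hballB hosc
  rw [← mul_assoc, mul_div_cancel_right₀ _ hδ.ne'] at hle
  linarith

end LocallyBoundedDerivative

section HolomorphicCurves

variable {V : Type*} [NormedAddCommGroup V] [NormedSpace ℂ V] [FiniteDimensional ℂ V]
  {Ω K : Set V} {J : V → V →L[ℝ] V} {r : V → ℝ}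

theorem isLocLipschitzCurveOn_of_mapsTo (hΩ : IsOpen Ω) (hJ : IsACS Ω J)
    (hr : ContDiffOn ℝ 2 r Ω) (hpsh : StrictPSHOn J r Ω) (hK : IsCompact K) (hKΩ : K ⊆ Ω)
    {h : ℂ → V} {U : Set ℂ} (hU : IsOpen U)
    (hh : IsHolomorphicMapOn (fun _ => Jst ℂ) J h U) (hmaps : MapsTo h U K) :
    IsLocLipschitzCurveOn J h U := by
  obtain ⟨C, hC, hschwarz⟩ := exists_norm_sub_le_of_isLocLipschitzCurveOn hΩ hJ hr hpsh hK hKΩ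
  refine ⟨hh, fun ζ hζ => isBoundedUnder_norm_fderiv_of_forall_ball hU (fun x hx => (hh x hx).1) hC
    (fun z d M hd hzU hbdd hM => ?_) hζ⟩
  have hz : z ∈ ball z d := mem_ball_self hd
  have hM0 : 0 ≤ M := (norm_nonneg _).trans (hM z hz)
  refine (hh z (hzU hz)).1.hasFDerivAt.le_of_lip' (by positivity) ?_
  filter_upwards [ball_mem_nhds z hd] with ξ hξ
  rw [div_mul_eq_mul_div]
  exact hschwarz h z d M ⟨fun x hx => hh x (hzU hx), hbdd⟩ (hmaps.mono_left hzU) hM ξ hξ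

end HolomorphicCurves

section Attraction

theorem circleAverage_le_of_forall_arc {u : ℂ → ℝ} {c : ℂ} {R θ₀ ρ m : ℝ}
    (hu : ContinuousOn u (sphere c |R|)) (hnonpos : ∀ z ∈ sphere c |R|, u z ≤ 0)
    (hρ : ρ ∈ Icc 0 (2 * Real.pi))
    (harc : ∀ θ ∈ Icc θ₀ (θ₀ + ρ), u (circleMap c R θ) ≤ -m) :
    Real.circleAverage u c R ≤ -(ρ / (2 * Real.pi) * m) := by
  have hcont : Continuous fun θ => u (circleMap c R θ) :=
    hu.comp_continuous (continuous_circleMap c R) (circleMap_mem_sphere' c R)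
  have hint : ∀ a b, IntervalIntegrable (fun θ => u (circleMap c R θ)) MeasureTheory.volume a b :=
    hcont.intervalIntegrable
  have hrotate : ∫ θ in 0..2 * Real.pi, u (circleMap c R θ) =
      ∫ θ in θ₀..θ₀ + 2 * Real.pi, u (circleMap c R θ) := by
    simpa using ((periodic_circleMap c R).comp u).intervalIntegral_add_eq 0 θ₀
  have hon : ∫ θ in θ₀..θ₀ + ρ, u (circleMap c R θ) ≤ ρ * -m := by
    simpa using intervalIntegral.integral_mono_on (by linarith [hρ.1]) (hint _ _)
      intervalIntegrable_const harc
  have hoff : ∫ θ in θ₀ + ρ..θ₀ + 2 * Real.pi, u (circleMap c R θ) ≤ 0 := by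
    simpa using intervalIntegral.integral_mono_on (by linarith [hρ.2]) (hint _ _)
      (intervalIntegrable_const (c := (0 : ℝ))) fun θ _ => hnonpos _ (circleMap_mem_sphere' c R θ)
  rw [Real.circleAverage, smul_eq_mul, hrotate,
    ← intervalIntegral.integral_add_adjacent_intervals (hint _ _) (hint _ _), inv_mul_eq_div,
    div_le_iff₀ Real.two_pi_pos]
  calc _ ≤ ρ * -m + 0 := add_le_add hon hoff
    _ = _ := by field_simp; ring

theorem circleAverage_le_of_forall_ball {u : ℂ → ℝ} {ζ : ℂ} {ρ m : ℝ}
    (hu : ContinuousOn u (sphere 0 ‖ζ‖)) (hnonpos : ∀ z ∈ sphere 0 ‖ζ‖, u z ≤ 0)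
    (hζ : ‖ζ‖ ≤ 1) (hρ : ρ ∈ Icc 0 (2 * Real.pi))
    (hball : ∀ z ∈ sphere 0 ‖ζ‖ ∩ closedBall ζ ρ, u z ≤ -m) :
    Real.circleAverage u 0 ‖ζ‖ ≤ -(ρ / (2 * Real.pi) * m) := by
  rw [← abs_norm ζ] at hu hnonpos
  refine circleAverage_le_of_forall_arc (θ₀ := ζ.arg) hu hnonpos hρ fun θ hθ => hball _
    ⟨circleMap_mem_sphere 0 (norm_nonneg ζ) θ, ?_⟩
  have harg : circleMap 0 ‖ζ‖ ζ.arg = ζ := by simp [circleMap_zero]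
  calc dist (circleMap 0 ‖ζ‖ θ) ζ = dist (circleMap 0 ‖ζ‖ θ) (circleMap 0 ‖ζ‖ ζ.arg) := by rw [harg]
    _ ≤ ‖ζ‖ * dist θ ζ.arg := by simpa using (lipschitzWith_circleMap 0 ‖ζ‖).dist_le_mul θ ζ.arg
    _ ≤ 1 * ρ := by
      gcongr
      rw [Real.dist_eq, abs_of_nonneg (sub_nonneg.2 hθ.1)]
      linarith [hθ.2]
    _ = ρ := one_mul ρ

variable {V : Type*} [NormedAddCommGroup V] [NormedSpace ℂ V] {Ω D K : Set V}
  {J : V → V →L[ℝ] V} {r : V → ℝ} {p : V} {S : Set ℂ} {ε : ℝ}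

theorem IsJDisc.comp_left {f : V → V} {h : ℂ → V} (hh : IsJDisc J D h)
    (hf : IsHolomorphicMapOn J J f D) (hfD : MapsTo f D D) : IsJDisc J D (f ∘ h) := by
  refine ⟨hfD.comp hh.1, fun ζ hζ => ?_⟩
  obtain ⟨hhd, hhJ⟩ := hh.2 ζ hζ
  obtain ⟨hfd, hfJ⟩ := hf _ (hh.1 hζ)
  refine ⟨hfd.comp ζ hhd, ?_⟩
  rw [fderiv_comp ζ hfd hhd, ContinuousLinearMap.comp_assoc, hhJ,
    ← ContinuousLinearMap.comp_assoc, hfJ, ContinuousLinearMap.comp_assoc, Function.comp_apply]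

theorem nonneg_of_mem_frontier_setOf_neg {T : Type*} [TopologicalSpace T] {Ω : Set T} {r : T → ℝ}
    {p : T} (hΩ : IsOpen Ω) (hr : ContinuousOn r Ω) (hpΩ : p ∈ Ω)
    (hp : p ∈ frontier {x ∈ Ω | r x < 0}) : 0 ≤ r p := by
  have hopen : IsOpen {x ∈ Ω | r x < 0} := hr.isOpen_inter_preimage hΩ isOpen_Iio
  rw [hopen.frontier_eq] at hp
  exact not_lt.1 fun hneg => hp.2 ⟨hpΩ, hneg⟩

variable [FiniteDimensional ℂ V]

theorem IsJDisc.isLocLipschitzCurveOn (hΩ : IsOpen Ω) (hJ : IsACS Ω J)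
    (hr : ContDiffOn ℝ 2 r Ω) (hpsh : StrictPSHOn J r Ω) (hK : IsCompact K) (hKΩ : K ⊆ Ω)
    {h : ℂ → V} (hh : IsJDisc J K h) : IsLocLipschitzCurveOn J h (ball 0 1) :=
  isLocLipschitzCurveOn_of_mapsTo hΩ hJ hr hpsh hK hKΩ isOpen_ball hh.2 hh.1

theorem exists_forall_isJDisc_norm_sub_lt (hΩ : IsOpen Ω) (hJ : IsACS Ω J)
    (hr : ContDiffOn ℝ 2 r Ω) (hpsh : StrictPSHOn J r Ω) (hK : IsCompact K) (hKΩ : K ⊆ Ω)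
    (hS : IsCompact S) (hS1 : S ⊆ ball 0 1) (hε : 0 < ε) :
    ∃ ρ > 0, ∀ h, IsJDisc J K h → ∀ ζ ∈ S, ∀ ξ ∈ ball ζ ρ, ‖h ξ - h ζ‖ < ε := by
  obtain ⟨C, -, hschwarz⟩ := exists_norm_sub_le_of_isLocLipschitzCurveOn hΩ hJ hr hpsh hK hKΩ
  obtain ⟨s, hs, hSs⟩ := exists_pos_lt_subset_ball one_pos hS.isClosed hS1
  have hd : 0 < 1 - s := sub_pos.2 hs.2
  have hlim : Tendsto (fun t => C * diam K * t / (1 - s)) (𝓝 0) (𝓝 0) := by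
    have : Continuous fun t => C * diam K * t / (1 - s) := by fun_prop
    simpa using this.tendsto 0
  obtain ⟨ρ, hρ, hsmall⟩ := Metric.eventually_nhds_iff_ball.1 (hlim.eventually_lt_const hε)
  refine ⟨min ρ (1 - s), by positivity, fun h hh ζ hζ ξ hξ => ?_⟩
  obtain ⟨hξρ, hξs⟩ := lt_min_iff.1 (mem_ball.1 hξ)
  have hball : ball ζ (1 - s) ⊆ ball 0 1 :=
    ball_subset_ball' (by linarith [mem_ball.1 (hSs hζ)])
  have hζ1 : ζ ∈ ball 0 1 := hS1 hζ
  refine (hschwarz h ζ (1 - s) (diam K)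
    ((hh.isLocLipschitzCurveOn hΩ hJ hr hpsh hK hKΩ).mono hball) (hh.1.mono_left hball)
    (fun x hx => ?_) ξ hξs).trans_lt (hsmall _ ?_)
  · rw [← dist_eq_norm]
    exact dist_le_diam_of_mem hK.isBounded (hh.1 (hball hx)) (hh.1 hζ1)
  · rwa [mem_ball_zero_iff, norm_norm, ← dist_eq_norm]

theorem exists_isC2PSHOn_le_sub_mul_norm_sq (hΩ : IsOpen Ω) (hJ : IsACS Ω J)
    (hr : ContDiffOn ℝ 2 r Ω) (hpsh : StrictPSHOn J r Ω) (hK : IsCompact K) (hKΩ : K ⊆ Ω) (p : V) :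
    ∃ c > 0, ∃ φ : V → ℝ, ContDiffOn ℝ 2 φ Ω ∧ IsC2PSHOn J φ K ∧ φ p = r p ∧
      ∀ y, φ y ≤ r y - c * ‖y - p‖ ^ 2 := by
  have := FiniteDimensional.proper ℂ V
  have := FiniteDimensional.complexToReal V
  obtain ⟨G, -, hG⟩ := exists_symm_norm_sq_le V
  set Q : V → ℝ := fun y => G (y - p) (y - p) with hQ
  have hQ2 : ContDiff ℝ 2 Q := by fun_prop
  obtain ⟨lam, hlam, hrlevi⟩ := exists_pos_mul_norm_sq_le_leviForm hΩ hJ hr hpsh hK hKΩ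
  obtain ⟨M, hM, hQlevi⟩ := exists_leviForm_le_mul_norm_sq hΩ hJ hQ2.contDiffOn hK hKΩ
  have hφ : ContDiffOn ℝ 2 (fun y => r y + -(lam / M) * Q y) Ω :=
    hr.add (contDiffOn_const.mul hQ2.contDiffOn)
  refine ⟨lam / M, by positivity, _, hφ,
    ⟨fun y hy => hφ.contDiffAt (hΩ.mem_nhds (hKΩ hy)), fun y hy X => ?_⟩, by simp [hQ], fun y => ?_⟩
  · have hyΩ := hΩ.mem_nhds (hKΩ hy)
    rw [leviForm_add_const_mul ((hJ.smooth.contDiffAt hyΩ).of_le (by exact_mod_cast le_top))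
      (hr.contDiffAt hyΩ) hQ2.contDiffAt, neg_mul, ← sub_eq_add_neg, sub_nonneg]
    calc lam / M * leviForm J Q y X ≤ lam / M * (M * ‖X‖ ^ 2) := by gcongr; exact hQlevi y hy X
      _ = lam * ‖X‖ ^ 2 := by field_simp
      _ ≤ leviForm J r y X := hrlevi y hy X
  · have hscaled : lam / M * ‖y - p‖ ^ 2 ≤ lam / M * Q y := by gcongr; exact hG (y - p)
    linarith

theorem eventually_forall_isJDisc_norm_sub_lt (hΩ : IsOpen Ω) (hJ : IsACS Ω J)
    (hr : ContDiffOn ℝ 2 r Ω) (hpsh : StrictPSHOn J r Ω) (hK : IsCompact K) (hKΩ : K ⊆ Ω)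
    (hrD : ∀ y ∈ D, r y ≤ 0) (hDK : D ⊆ K) (hpΩ : p ∈ Ω) (hp : 0 ≤ r p)
    (hS : IsCompact S) (hS1 : S ⊆ ball 0 1) (hε : 0 < ε) :
    ∀ᶠ x in 𝓝 p, ∀ h, IsJDisc J D h → h 0 = x → ∀ ζ ∈ S, ‖h ζ - p‖ < ε := by
  have : CompleteSpace V := FiniteDimensional.complete ℂ V
  obtain ⟨c, hc, φ, hφ, hφpsh, hφp, hφle⟩ :=
    exists_isC2PSHOn_le_sub_mul_norm_sq hΩ hJ hr hpsh hK hKΩ p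
  obtain ⟨ρ', hρ', hequi⟩ :=
    exists_forall_isJDisc_norm_sub_lt hΩ hJ hr hpsh hK hKΩ hS hS1 (half_pos hε)
  obtain ⟨ρ, hρ, hρlt⟩ := exists_between (lt_min hρ' Real.two_pi_pos)
  obtain ⟨hρρ', hρπ⟩ := lt_min_iff.1 hρlt
  have hφcont : ContinuousAt φ p := hφ.continuousOn.continuousAt (hΩ.mem_nhds hpΩ)
  have hpeak : -(ρ / (2 * Real.pi) * (c * (ε / 2) ^ 2)) < φ p :=
    (neg_lt_zero.2 (by positivity)).trans_le (hφp ▸ hp)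
  filter_upwards [hφcont.eventually_const_lt hpeak] with _ hx h hh rfl ζ hζ
  by_contra! hfar
  have hhK : IsJDisc J K h := ⟨hh.1.mono_right hDK, hh.2⟩
  have hζ1 : ‖ζ‖ < 1 := mem_ball_zero_iff.1 (hS1 hζ)
  have hsphere : sphere 0 ‖ζ‖ ⊆ ball (0 : ℂ) 1 :=
    sphere_subset_closedBall.trans (closedBall_subset_ball hζ1)
  have hcont : ContinuousOn (φ ∘ h) (sphere 0 ‖ζ‖) := fun ξ hξ =>
    ((hφpsh.contDiffAt _ (hhK.1 (hsphere hξ))).continuousAt.comp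
      (hh.2 ξ (hsphere hξ)).1.continuousAt).continuousWithinAt
  have hnonpos : ∀ ξ ∈ sphere (0 : ℂ) ‖ζ‖, φ (h ξ) ≤ -(c * ‖h ξ - p‖ ^ 2) := fun ξ hξ => by
    linarith [hφle (h ξ), hrD _ (hh.1 (hsphere hξ))]
  have hmean : φ (h 0) ≤ Real.circleAverage (φ ∘ h) 0 ‖ζ‖ :=
    le_circleAverage_comp hΩ hJ (hhK.isLocLipschitzCurveOn hΩ hJ hr hpsh hK hKΩ)
      (hhK.1.mono_right hKΩ) (hφpsh.mono hhK.1.image_subset) ⟨norm_nonneg ζ, hζ1⟩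
  refine hx.not_ge (hmean.trans (circleAverage_le_of_forall_ball hcont
    (fun ξ hξ => (hnonpos ξ hξ).trans (neg_nonpos.2 (by positivity))) hζ1.le ⟨hρ.le, hρπ.le⟩ ?_))
  rintro ξ ⟨hξ, hξζ⟩
  have hnear : ‖h ξ - h ζ‖ < ε / 2 := hequi h hhK ζ hζ ξ (hξζ.trans_lt hρρ')
  have hfarξ : ε / 2 ≤ ‖h ξ - p‖ := by
    linarith [norm_sub_le_norm_sub_add_norm_sub (h ζ) (h ξ) p, norm_sub_rev (h ζ) (h ξ)]
  exact (hnonpos ξ hξ).trans (neg_le_neg (by gcongr))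

theorem statement13_general {ι : Type*} {l : Filter ι} (hΩ : IsOpen Ω) (hJ : IsACS Ω J)
    (hr : ContDiffOn ℝ 2 r Ω) (hpsh : StrictPSHOn J r Ω) (hD : D = {x ∈ Ω | r x < 0})
    (hDcomp : IsCompact (closure D)) (hDΩ : closure D ⊆ Ω) (hp : p ∈ frontier D) {x₀ : V}
    {f : ι → V → V} (hf : ∀ ν, IsHolomorphicMapOn J J (f ν) D) (hfD : ∀ ν, MapsTo (f ν) D D)
    (horbit : Tendsto (fun ν => f ν x₀) l (𝓝 p)) (hS : IsCompact S) (hS1 : S ⊆ ball 0 1)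
    (hε : 0 < ε) :
    ∀ᶠ ν in l, ∀ h, IsJDisc J D h → h 0 = x₀ → ∀ ζ ∈ S, ‖f ν (h ζ) - p‖ < ε := by
  have hpΩ : p ∈ Ω := hDΩ (frontier_subset_closure hp)
  have hrp : 0 ≤ r p := nonneg_of_mem_frontier_setOf_neg hΩ hr.continuousOn hpΩ (hD ▸ hp)
  have hrD : ∀ y ∈ D, r y ≤ 0 := fun y hy => (hD.subset hy).2.le
  filter_upwards [horbit.eventually (eventually_forall_isJDisc_norm_sub_lt hΩ hJ hr hpsh hDcomp hDΩ
    hrD subset_closure hpΩ hrp hS hS1 hε)] with ν hν h hh h0 ζ hζ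
  exact hν (f ν ∘ h) (hh.comp_left (hf ν) (hfD ν)) (congrArg (f ν) h0) ζ hζ

end Attraction

/-- **Uniform attraction along `J`-holomorphic discs.** If the automorphism orbit
`f^ν(x⁰)` converges to `p ∈ ∂D`, then `f^ν ∘ f (K) → p` uniformly over all
`J`-holomorphic discs `f : Δ → D` with `f(0) = x⁰`. -/
theorem statement13
    (Ω : Set E2) (hΩ : IsOpen Ω) (J : E2 → E2 →L[ℝ] E2) (hJ : IsACS Ω J)
    (r : E2 → ℝ) (hr : ContDiffOn ℝ 2 r Ω) (hrpsh : StrictPSHOn J r Ω)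
    (D : Set E2) (hDdef : D = {x ∈ Ω | r x < 0})
    (hDcomp : IsCompact (closure D)) (hDΩ : closure D ⊆ Ω)
    (hdr : ∀ x ∈ frontier D, fderiv ℝ r x ≠ 0)
    (x0 : E2) (hx0 : x0 ∈ D) (p : E2) (hp : p ∈ frontier D)
    (f g : ℕ → E2 → E2)
    (hdiffeo : ∀ ν, IsDiffeoOn (f ν) (g ν) D D)
    (hhol : ∀ ν, IsHolomorphicMapOn J J (f ν) D)
    (horbit : Tendsto (fun ν => f ν x0) atTop (𝓝 p)) :
    ∀ K : Set ℂ, IsCompact K → K ⊆ ball (0 : ℂ) 1 → (0 : ℂ) ∈ K →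
      ∀ ε > 0, ∃ N : ℕ, ∀ ν ≥ N, ∀ h : ℂ → E2, IsJDisc J D h → h 0 = x0 →
        ∀ ζ ∈ K, ‖f ν (h ζ) - p‖ < ε := by
  intro K hK hK1 _ ε hε
  exact eventually_atTop.1 (statement13_general hΩ hJ hr hrpsh hDdef hDcomp hDΩ hp hhol
    (fun ν => (hdiffeo ν).2.2.1) horbit hK hK1 hε)

end
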